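/- arXiv:math/0101146 — 3 statements merged into one kernel-verified Lean document; each statement's English description precedes it below -/
import Mathlib

section
/- Let M and B be unital C*-algebras with B ⊆ M a unital C*-subalgebra, E : M → B a positive conditional expectation, and F : B → ℂ a faithful state (F(b*b) = 0 implies b = 0). Assume τ = F∘E is a faithful trace on M (τ(xy) = τ(yx) for all x, y ∈ M, and τ(x*x) = 0 implies x = 0). Let X = X* ∈ M be a B-semicircular variable. Then the distribution of X with respect to τ is a semicircle law — i.e. there exists r ≥ 0 such that τ(X^k) = ∫ t^k dν_r(t) for all k ≥ 1, where ν_r is the semicircle law of variance r — if and only if E(X²) ∈ ℂ·1. -/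
open scoped Classical

noncomputable section

namespace OVFree

variable {B M : Type*}

/-- `P` is a set partition of `{1, …, n}` (modelled on `Fin n`): its blocks are
nonempty and every point lies in exactly one block. -/
def IsPartition {n : ℕ} (P : Finset (Finset (Fin n))) : Prop :=
  (∀ t ∈ P, t.Nonempty) ∧ ∀ i : Fin n, ∃! t, t ∈ P ∧ i ∈ t

/-- A set partition is non-crossing if there are no `a < b < c < d` with `a, c` in one
block and `b, d` in a different block. -/
def IsNonCrossing {n : ℕ} (P : Finset (Finset (Fin n))) : Prop :=
  ∀ a b c d : Fin n, a < b → b < c → c < d →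
    ∀ t ∈ P, ∀ u ∈ P, a ∈ t → c ∈ t → b ∈ u → d ∈ u → t = u

/-- `NC n`: the (finite) set of non-crossing partitions of `{1, …, n}`. -/
def NC (n : ℕ) : Finset (Finset (Finset (Fin n))) :=
  Finset.univ.filter fun P => IsPartition P ∧ IsNonCrossing P

/-- `i` is the least element of its block of `P`. -/
def IsBlockMin {n : ℕ} (P : Finset (Finset (Fin n))) (i : Fin n) : Prop :=
  ∀ t ∈ P, i ∈ t → ∀ j ∈ t, i ≤ j

/-- `i` is the greatest element of its block of `P`. -/
def IsBlockMax {n : ℕ} (P : Finset (Finset (Fin n))) (i : Fin n) : Prop :=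
  ∀ t ∈ P, i ∈ t → ∀ j ∈ t, j ≤ i

section Brack

variable [Ring B] [Algebra ℂ B] [Ring M] [Algebra ℂ M]

/-- A multiplicative map `⟨⋯⟩ : ⋃ₙ Mⁿ → B` (tuples are encoded as lists): a sequence of
`ℂ`-multilinear maps which is `B`-balanced in the sense of Speicher.  Here `ι : B →ₐ[ℂ] M`
is the inclusion of `B` as a unital subalgebra of `M`. -/
structure MultiplicativeMap (ι : B →ₐ[ℂ] M) where
  toFun : List M → B
  map_add : ∀ (pre : List M) (x y : M) (post : List M),
    toFun (pre ++ (x + y) :: post) = toFun (pre ++ x :: post) + toFun (pre ++ y :: post)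
  map_smul : ∀ (pre : List M) (c : ℂ) (x : M) (post : List M),
    toFun (pre ++ (c • x) :: post) = c • toFun (pre ++ x :: post)
  B_left : ∀ (b : B) (x : M) (post : List M),
    toFun ((ι b * x) :: post) = b * toFun (x :: post)
  B_right : ∀ (pre : List M) (x : M) (b : B),
    toFun (pre ++ [x * ι b]) = toFun (pre ++ [x]) * b
  B_mid : ∀ (pre : List M) (x : M) (b : B) (y : M) (post : List M),
    toFun (pre ++ (x * ι b) :: y :: post) = toFun (pre ++ x :: (ι b * y) :: post)

/-- Auxiliary operation: multiply the most recently collected argument of an open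
bracket (arguments are stored in reverse order) on the right by `ι b`. -/
def closeArg (ι : B →ₐ[ℂ] M) (b : B) : List M → List M
  | [] => []
  | a :: t => (a * ι b) :: t

/-- One step of the evaluation of the bracketing `π⟨m₁, …, mₙ⟩`.  The state consists of a
stack of argument lists (in reverse order) for the currently open brackets, together with
the product of the values of the already closed outermost brackets.  When `i` is the least
element of its block a new bracket is opened; `m i` is appended to the innermost open
bracket; when `i` is the greatest element of its block the innermost bracket `⟨…⟩` is
evaluated via `κ` and its value is multiplied into the preceding argument of the enclosing
bracket (per the insertion rule), resp. into the outer product (per the disjoint-union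
rule). -/
def bracketingStep (κ : List M → B) (ι : B →ₐ[ℂ] M) {n : ℕ} (P : Finset (Finset (Fin n)))
    (m : Fin n → M) (s : List (List M) × B) (i : Fin n) : List (List M) × B :=
  let st₁ : List (List M) := if IsBlockMin P i then [] :: s.1 else s.1
  let st₂ : List (List M) :=
    match st₁ with
    | [] => []
    | ts :: rest => (m i :: ts) :: rest
  if IsBlockMax P i then
    match st₂ with
    | [] => ([], s.2)
    | ts :: rest =>
        let b := κ ts.reverse
        match rest with
        | [] => ([], s.2 * b)
        | us :: rest' => (closeArg ι b us :: rest', s.2)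
  else (st₂, s.2)

/-- The bracketing `π⟨m₁, …, mₙ⟩ ∈ B` determined by a non-crossing partition `P` and a
multiplicative map `κ`: each block of `P` is interpreted as a bracket `⟨⋯⟩`, inner blocks
being inserted (as elements of `B`) after the preceding element of the enclosing block,
and the values of the outermost brackets being multiplied in order. -/
def bracketing (κ : List M → B) (ι : B →ₐ[ℂ] M) {n : ℕ} (P : Finset (Finset (Fin n)))
    (m : Fin n → M) : B :=
  ((List.finRange n).foldl (bracketingStep κ ι P m) ([], 1)).2

/-- `κ` is the `B`-valued cumulant map `{⋯}_E` of the `B`-probability space `(M, E)`: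
a multiplicative map satisfying the moment–cumulant formula
`E(m₁ ⋯ mₙ) = Σ_{π ∈ NC(n)} π{m₁, …, mₙ}_E`. -/
def IsCumulantMap (ι : B →ₐ[ℂ] M) (E : M →ₗ[ℂ] B) (κ : MultiplicativeMap ι) : Prop :=
  ∀ (n : ℕ) (m : Fin n → M), 0 < n →
    E (((List.finRange n).map m).prod) = ∑ P ∈ NC n, bracketing κ.toFun ι P m

/-- The cumulant series `k_{i₁,…,i_{k+1}}(b₁, …, b_k) = {X_{i₁} b₁, …, X_{i_k} b_k, X_{i_{k+1}}}`
of a family `X₁, …, X_N` with respect to a multiplicative map `κ`. -/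
def cumulantSeries {ι : B →ₐ[ℂ] M} (κ : MultiplicativeMap ι) {N : ℕ} (X : Fin N → M)
    {k : ℕ} (i : Fin (k + 1) → Fin N) (b : Fin k → B) : B :=
  κ.toFun (((List.finRange k).map fun j => X (i j.castSucc) * ι (b j)) ++ [X (i (Fin.last k))])

/-- `E : M → B` is a conditional expectation onto the unital subalgebra `ι(B) ⊆ M`. -/
def IsCondExp (ι : B →ₐ[ℂ] M) (E : M →ₗ[ℂ] B) : Prop :=
  E 1 = 1 ∧ ∀ (b b' : B) (m : M), E (ι b * m * ι b') = b * E m * b'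

/-- The subalgebras `A₁, A₂ ⊆ M` are free with amalgamation (with respect to the
`D`-valued expectation `G`, `D` being a common subalgebra of `A₁` and `A₂`): any
alternating product of `G`-centered elements of `A₁` and `A₂` is `G`-centered. -/
def FreeWithAmalgamation (G : M → B) (A₁ A₂ : Subalgebra ℂ M) : Prop :=
  ∀ l : List (M × Bool), l ≠ [] →
    List.Chain' (fun p q : M × Bool => p.2 ≠ q.2) l →
    (∀ p ∈ l, p.1 ∈ (if p.2 then A₁ else A₂) ∧ G p.1 = 0) →
    G (l.map Prod.fst).prod = 0

end Brack

end OVFree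

open OVFree MeasureTheory

open scoped ComplexOrder

/-- The semicircle law of variance `r ≥ 0`: for `r > 0` the measure on `ℝ` with density
`t ↦ (2πr)⁻¹ √(max(4r − t², 0))` with respect to Lebesgue measure; for `r = 0` the Dirac
mass at `0`. -/
noncomputable def semicircleLaw (r : ℝ) : Measure ℝ :=
  if r = 0 then Measure.dirac 0
  else volume.withDensity fun t =>
    ENNReal.ofReal ((2 * Real.pi * r)⁻¹ * Real.sqrt (max (4 * r - t ^ 2) 0))


open MeasureTheory intervalIntegral in
theorem sc_S (k : ℕ) : (∫ x in (-(Real.pi/2))..(Real.pi/2), Real.sin x ^ (k+2)) =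
    (k+1)/(k+2) * ∫ x in (-(Real.pi/2))..(Real.pi/2), Real.sin x ^ k := by
  rw [integral_sin_pow]; simp

theorem sc_J (k : ℕ) : (∫ x in (-(Real.pi/2))..(Real.pi/2), Real.sin x ^ k * Real.cos x ^ 2) =
    1/(k+2) * ∫ x in (-(Real.pi/2))..(Real.pi/2), Real.sin x ^ k := by
  have : ∀ x : ℝ, Real.sin x ^ k * Real.cos x ^ 2 = Real.sin x ^ k - Real.sin x ^ (k+2) := by
    intro x; rw [Real.cos_sq']; ring
  simp_rw [this]
  rw [intervalIntegral.integral_sub, sc_S]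
  · field_simp; ring
  · exact (Real.continuous_sin.pow _).intervalIntegrable _ _
  · exact (Real.continuous_sin.pow _).intervalIntegrable _ _

theorem sc_int (r : ℝ) (hr : 0 < r) (k : ℕ) :
    ∫ t, t ^ k ∂(semicircleLaw r) = (2 * Real.pi * r)⁻¹ * (2 * Real.sqrt r) ^ (k+2) *
      ∫ x in (-(Real.pi/2))..(Real.pi/2), Real.sin x ^ k * Real.cos x ^ 2 := by
  have hs : 0 < Real.sqrt r := Real.sqrt_pos.2 hr
  have hss : Real.sqrt r ^ 2 = r := Real.sq_sqrt hr.le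
  unfold semicircleLaw
  rw [if_neg hr.ne', integral_withDensity_eq_integral_toReal_smul]
  rotate_left
  · fun_prop
  · simp
  have h1 : ∀ t : ℝ, (ENNReal.ofReal ((2 * Real.pi * r)⁻¹ * Real.sqrt (max (4 * r - t ^ 2) 0))).toReal • t ^ k
      = (2 * Real.pi * r)⁻¹ * (t ^ k * Real.sqrt (max (4 * r - t ^ 2) 0)) := by
    intro t
    rw [ENNReal.toReal_ofReal (by positivity), smul_eq_mul]; ring
  simp_rw [h1]
  rw [integral_const_mul, mul_assoc _ (_ ^ _) _]
  congr 1
  have h2 : ∫ t, t ^ k * Real.sqrt (max (4 * r - t ^ 2) 0) =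
      ∫ t in (-(2 * Real.sqrt r))..(2 * Real.sqrt r), t ^ k * Real.sqrt (max (4 * r - t ^ 2) 0) := by
    rw [intervalIntegral.integral_of_le (by linarith)]
    symm
    apply setIntegral_eq_integral_of_forall_compl_eq_zero
    intro t ht
    have : 4 * r ≤ t ^ 2 := by
      rw [Set.mem_Ioc, not_and_or, not_lt, not_le] at ht
      rcases ht with h | h <;> nlinarith
    rw [max_eq_right (by linarith)]; simp
  rw [h2]
  have h3 := intervalIntegral.integral_comp_mul_deriv (a := -(Real.pi/2)) (b := Real.pi/2)
    (f := fun x => 2 * Real.sqrt r * Real.sin x) (f' := fun x => 2 * Real.sqrt r * Real.cos x)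
    (g := fun t => t ^ k * Real.sqrt (max (4 * r - t ^ 2) 0))
    (fun x _ => (Real.hasDerivAt_sin x).const_mul _) (by fun_prop) (by fun_prop)
  simp only [Real.sin_neg, Real.sin_pi_div_two, mul_neg, mul_one] at h3
  rw [← h3, ← intervalIntegral.integral_const_mul]
  apply intervalIntegral.integral_congr
  intro x hx
  rw [Set.uIcc_of_le (by linarith [Real.pi_pos])] at hx
  have hc := Real.cos_nonneg_of_mem_Icc hx
  have : Real.sqrt (max (4 * r - (2 * Real.sqrt r * Real.sin x) ^ 2) 0) = 2 * Real.sqrt r * Real.cos x := by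
    have : 4 * r - (2 * Real.sqrt r * Real.sin x) ^ 2 = (2 * Real.sqrt r * Real.cos x) ^ 2 := by
      rw [mul_pow, mul_pow, mul_pow, mul_pow, hss, Real.cos_sq']; ring
    rw [this, max_eq_left (by positivity), Real.sqrt_sq (by positivity)]
  simp only [Function.comp, this]
  ring

theorem sc_rec (r : ℝ) (hr : 0 ≤ r) (k : ℕ) :
    ∫ t, t ^ (k+2) ∂(semicircleLaw r) = 4 * r * ((k+1)/(k+4)) * ∫ t, t ^ k ∂(semicircleLaw r) := by
  rcases hr.eq_or_lt with rfl | hr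
  · simp [semicircleLaw]
  · have hss : Real.sqrt r ^ 2 = r := Real.sq_sqrt hr.le
    rw [sc_int r hr, sc_int r hr, sc_J, sc_J, sc_S]
    rw [pow_add (2 * Real.sqrt r) (k+2) 2, mul_pow 2 (Real.sqrt r) 2, hss]
    push_cast
    field_simp
    ring

theorem sc_zero (r : ℝ) (hr : 0 ≤ r) : ∫ t, t ^ 0 ∂(semicircleLaw r) = 1 := by
  rcases hr.eq_or_lt with rfl | hr
  · simp [semicircleLaw]
  · have hss : Real.sqrt r ^ 2 = r := Real.sq_sqrt hr.le
    rw [sc_int r hr, sc_J, mul_pow, zero_add, hss]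
    have := Real.pi_pos
    simp; field_simp

theorem sc_one (r : ℝ) (hr : 0 ≤ r) : ∫ t, t ^ 1 ∂(semicircleLaw r) = 0 := by
  rcases hr.eq_or_lt with rfl | hr
  · simp [semicircleLaw]
  · rw [sc_int r hr, sc_J]
    simp

theorem catalan_rec_real (j : ℕ) : ((j:ℝ)+2) * catalan (j+1) = 2 * (2*j+1) * catalan j := by
  have h1 := succ_mul_catalan_eq_centralBinom (j+1)
  have h2 := succ_mul_catalan_eq_centralBinom j
  have h3 := Nat.succ_mul_centralBinom_succ j
  rw [← h1, ← h2] at h3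
  have h4 : (j+1 : ℝ) * ((j+1+1) * catalan (j+1)) = 2 * (2*j+1) * ((j+1) * catalan j) := by
    exact_mod_cast h3
  have : (j+1:ℝ) ≠ 0 := by positivity
  apply mul_left_cancel₀ this
  linarith

theorem sc_even (r : ℝ) (hr : 0 ≤ r) (j : ℕ) :
    ∫ t, t ^ (2*j) ∂(semicircleLaw r) = catalan j * r ^ j := by
  induction j with
  | zero => simpa using sc_zero r hr
  | succ j ih =>
    rw [mul_add, mul_one, sc_rec r hr, ih]
    have := catalan_rec_real j
    have h : (catalan (j+1) : ℝ) = 2 * (2*j+1) * catalan j / (j+2) := by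
      field_simp; linarith
    rw [h]; push_cast; field_simp; ring

theorem sc_odd (r : ℝ) (hr : 0 ≤ r) (j : ℕ) :
    ∫ t, t ^ (2*j+1) ∂(semicircleLaw r) = 0 := by
  induction j with
  | zero => simpa using sc_one r hr
  | succ j ih =>
    rw [show 2*(j+1)+1 = 2*j+1+2 by ring, sc_rec r hr, ih, mul_zero]

namespace OVFree

/-- height of a Boolean word. -/
def hgt {n : ℕ} (w : Fin n → Bool) (i : ℕ) : ℤ :=
  ∑ k : Fin n with k.val < i, if w k then 1 else -1

def IsDyck {n : ℕ} (w : Fin n → Bool) : Prop :=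
  (∀ i : Fin (n+1), 0 ≤ hgt w i) ∧ hgt w n = 0

theorem hgt_zero {n : ℕ} (w : Fin n → Bool) : hgt w 0 = 0 := by simp [hgt]

theorem hgt_succ {n : ℕ} (w : Fin n → Bool) (i : Fin n) :
    hgt w (i+1) = hgt w i + if w i then 1 else -1 := by
  unfold hgt
  have : (Finset.univ.filter fun k : Fin n => k.val < i + 1) =
      insert i (Finset.univ.filter fun k : Fin n => k.val < i) := by
    ext k; simp [Fin.ext_iff]; omega
  rw [this, Finset.sum_insert (by simp), add_comm]

theorem hgt_sub {n : ℕ} (w : Fin n → Bool) (a b : ℕ) (hab : a ≤ b) :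
    hgt w b - hgt w a = ∑ k : Fin n with a ≤ k.val ∧ k.val < b, if w k then 1 else -1 := by
  unfold hgt
  rw [sub_eq_iff_eq_add, ← Finset.sum_union]
  · congr 1; ext k; simp; omega
  · rw [Finset.disjoint_left]; intro k; simp; omega

/-- `i` and `j` are matched in the word `w`. -/
def Rel {n : ℕ} (w : Fin n → Bool) (i j : Fin n) : Prop :=
  i < j ∧ hgt w (j+1) = hgt w i ∧ ∀ k : ℕ, i.val < k → k ≤ j → hgt w i < hgt w k

theorem Rel.left {n : ℕ} {w : Fin n → Bool} {i j : Fin n} (h : Rel w i j) : w i = true := by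
  have h1 := h.2.2 (i+1) (by omega) (by have := h.1; rw [Fin.lt_def] at this; omega)
  rw [hgt_succ] at h1
  cases hc : w i
  · rw [hc] at h1; simp at h1
  · rfl

theorem Rel.right {n : ℕ} {w : Fin n → Bool} {i j : Fin n} (h : Rel w i j) : w j = false := by
  have h1 := h.2.2 j (by exact h.1) le_rfl
  have h2 := h.2.1
  rw [hgt_succ] at h2
  cases hc : w j
  · rfl
  · rw [hc] at h2; simp at h2; omega

theorem Rel.uniq_right {n : ℕ} {w : Fin n → Bool} {i j j' : Fin n} (h : Rel w i j)
    (h' : Rel w i j') : j = j' := by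
  by_contra hne
  wlog hlt : j < j' generalizing j j'
  · exact this h' h (Ne.symm hne) (lt_of_le_of_ne (not_lt.1 hlt) (Ne.symm hne))
  have h0 := h.1
  rw [Fin.lt_def] at hlt h0
  have := h'.2.2 (j+1) (by omega) (by omega)
  have := h.2.1
  omega

theorem Rel.uniq_left {n : ℕ} {w : Fin n → Bool} {i i' j : Fin n} (h : Rel w i j)
    (h' : Rel w i' j) : i = i' := by
  by_contra hne
  wlog hlt : i < i' generalizing i i'
  · exact this h' h (Ne.symm hne) (lt_of_le_of_ne (not_lt.1 hlt) (Ne.symm hne))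
  have h0 := h'.1
  rw [Fin.lt_def] at hlt h0
  have := h.2.2 i' (by omega) (by omega)
  have := h.2.1
  have := h'.2.1
  omega

theorem exists_right {n : ℕ} {w : Fin n → Bool} (hw : IsDyck w) (i : Fin n) (hi : w i = true) :
    ∃ j, Rel w i j := by
  have hs := hgt_succ w i
  simp only [hi, if_true] at hs
  have hex : ∃ m, i.val < m ∧ hgt w m ≤ hgt w i :=
    ⟨n, i.2, by rw [hw.2]; exact hw.1 ⟨i, by omega⟩⟩
  classical
  set m := Nat.find hex with hm
  obtain ⟨hm1, hm2⟩ := Nat.find_spec hex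
  have hmin : ∀ k, k < m → i.val < k → hgt w i < hgt w k := by
    intro k hk hik
    have := Nat.find_min hex hk
    push Not at this
    exact this hik
  rw [← hm] at hm1 hm2
  have hmn : m ≤ n := Nat.find_min' hex ⟨i.2, by rw [hw.2]; exact hw.1 ⟨i, by omega⟩⟩
  have hm3 : m ≠ i.val + 1 := by intro h; rw [h, hs] at hm2; omega
  have hj : m - 1 < n := by omega
  have hs2 := hgt_succ w ⟨m-1, hj⟩
  simp only [show m - 1 + 1 = m by omega] at hs2
  have h4 := hmin (m-1) (by omega) (by omega)
  refine ⟨⟨m-1, hj⟩, ?_, ?_, ?_⟩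
  · rw [Fin.lt_def]; show i.val < m - 1; omega
  · simp only [show m - 1 + 1 = m by omega]
    split_ifs at hs2 <;> omega
  · intro k hk1 hk2
    simp only at hk2
    exact hmin k (by omega) hk1

theorem exists_left {n : ℕ} {w : Fin n → Bool} (hw : IsDyck w) (j : Fin n) (hj : w j = false) :
    ∃ i, Rel w i j := by
  have hs := hgt_succ w j
  simp only [hj] at hs
  classical
  have h0 : hgt w 0 ≤ hgt w (j+1) := by
    rw [hgt_zero]; exact hw.1 ⟨j+1, by omega⟩
  set m := Nat.findGreatest (fun k => hgt w k ≤ hgt w (j+1)) j with hm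
  have hm2 : hgt w m ≤ hgt w (j+1) :=
    Nat.findGreatest_spec (P := fun k => hgt w k ≤ hgt w (j+1)) (m := 0) (Nat.zero_le _) h0
  have hmj : m ≤ j := Nat.findGreatest_le _
  have hmax : ∀ k, m < k → k ≤ j → hgt w (j+1) < hgt w k := by
    intro k h1 h2
    exact not_le.1 (Nat.findGreatest_is_greatest h1 h2)
  have hne : m ≠ j := by intro h; rw [h] at hm2; simp at hs; omega
  have hs2 := hgt_succ w ⟨m, by omega⟩
  have h4 := hmax (m+1) (by omega) (by omega)
  simp only at hs2
  have heq : hgt w (j+1) = hgt w m := by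
    split_ifs at hs2 <;> omega
  refine ⟨⟨m, by omega⟩, ?_, heq, ?_⟩
  · rw [Fin.lt_def]; show m < j.val; omega
  · intro k hk1 hk2
    simp only at hk1 ⊢
    rw [← heq]
    exact hmax k hk1 hk2

theorem exists_rel {n : ℕ} {w : Fin n → Bool} (hw : IsDyck w) (i : Fin n) :
    ∃ a b, Rel w a b ∧ (i = a ∨ i = b) := by
  cases h : w i
  · obtain ⟨a, ha⟩ := exists_left hw i h
    exact ⟨a, i, ha, Or.inr rfl⟩
  · obtain ⟨a, ha⟩ := exists_right hw i h
    exact ⟨i, a, ha, Or.inl rfl⟩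

theorem Rel.eq_of_common {n : ℕ} {w : Fin n → Bool} {a b c d i : Fin n} (h : Rel w a b)
    (h' : Rel w c d) (hi : i = a ∨ i = b) (hi' : i = c ∨ i = d) : a = c ∧ b = d := by
  rcases hi with rfl | rfl <;> rcases hi' with rfl | rfl
  · exact ⟨rfl, h.uniq_right h'⟩
  · have := h.left; have := h'.right; simp_all
  · have := h.right; have := h'.left; simp_all
  · exact ⟨h.uniq_left h', rfl⟩

/-- The non-crossing pairing determined by a word. -/
def matching {n : ℕ} (w : Fin n → Bool) : Finset (Finset (Fin n)) :=
  Finset.univ.filter fun t => ∃ i j, Rel w i j ∧ t = {i, j}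

theorem mem_matching {n : ℕ} {w : Fin n → Bool} {t : Finset (Fin n)} :
    t ∈ matching w ↔ ∃ i j, Rel w i j ∧ t = {i, j} := by simp [matching]

theorem matching_mem_NC {n : ℕ} {w : Fin n → Bool} (hw : IsDyck w) : matching w ∈ NC n := by
  simp only [NC, Finset.mem_filter, Finset.mem_univ, true_and]
  refine ⟨⟨?_, ?_⟩, ?_⟩
  · intro t ht
    obtain ⟨i, j, -, rfl⟩ := mem_matching.1 ht
    simp
  · intro i
    obtain ⟨a, b, hab, hi⟩ := exists_rel hw i
    refine ⟨{a, b}, ⟨mem_matching.2 ⟨a, b, hab, rfl⟩, by simpa using hi⟩, ?_⟩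
    rintro t ⟨ht, hit⟩
    obtain ⟨c, d, hcd, rfl⟩ := mem_matching.1 ht
    obtain ⟨rfl, rfl⟩ := hab.eq_of_common hcd hi (by simpa using hit)
    rfl
  · intro a b c d hab hbc hcd t ht u hu hat hct hbu hdu
    obtain ⟨i, j, hij, rfl⟩ := mem_matching.1 ht
    obtain ⟨k, l, hkl, rfl⟩ := mem_matching.1 hu
    simp only [Finset.mem_insert, Finset.mem_singleton] at hat hct hbu hdu
    have h1 := hij.1
    have h2 := hkl.1
    have e1 : a = i := by omega
    have e2 : c = j := by omega
    have e3 : b = k := by omega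
    have e4 : d = l := by omega
    subst e1 e2 e3 e4
    rw [Fin.lt_def] at *
    have := hij.2.2 b hab hbc.le
    have := hkl.2.2 (c+1) (by omega) (by omega)
    have := hij.2.1
    omega

theorem matching_min {n : ℕ} {w : Fin n → Bool} (hw : IsDyck w) (i : Fin n) :
    IsBlockMin (matching w) i ↔ w i = true := by
  constructor
  · intro h
    obtain ⟨a, b, hab, hi⟩ := exists_rel hw i
    rcases hi with rfl | rfl
    · exact hab.left
    · have := h {a, i} (mem_matching.2 ⟨a, i, hab, rfl⟩) (by simp) a (by simp)
      exact absurd hab.1 (not_lt.2 this)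
  · intro hi t ht hit j hjt
    obtain ⟨a, b, hab, rfl⟩ := mem_matching.1 ht
    simp only [Finset.mem_insert, Finset.mem_singleton] at hit hjt
    have := hab.1
    have : i = a := by
      rcases hit with h | h
      · exact h
      · subst h; rw [hab.right] at hi; simp at hi
    omega

theorem matching_max {n : ℕ} {w : Fin n → Bool} (hw : IsDyck w) (i : Fin n) :
    IsBlockMax (matching w) i ↔ w i = false := by
  constructor
  · intro h
    obtain ⟨a, b, hab, hi⟩ := exists_rel hw i
    rcases hi with rfl | rfl
    · have := h {i, b} (mem_matching.2 ⟨i, b, hab, rfl⟩) (by simp) b (by simp)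
      exact absurd hab.1 (not_lt.2 this)
    · exact hab.right
  · intro hi t ht hit j hjt
    obtain ⟨a, b, hab, rfl⟩ := mem_matching.1 ht
    simp only [Finset.mem_insert, Finset.mem_singleton] at hit hjt
    have := hab.1
    have : i = b := by
      rcases hit with h | h
      · subst h; rw [hab.left] at hi; simp at hi
      · exact h
    omega

/-- The word of a partition. -/
def wordOf {n : ℕ} (P : Finset (Finset (Fin n))) (i : Fin n) : Bool := decide (IsBlockMin P i)

theorem sum_rest {n : ℕ} (w : Fin n → Bool) (σ : Fin n → Fin n) (hσ : ∀ i, σ (σ i) = i)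
    (hw : ∀ i, w (σ i) = !(w i)) (S : Finset (Fin n)) :
    (∑ k ∈ S, if w k then (1:ℤ) else -1) = ∑ k ∈ S with σ k ∉ S, if w k then (1:ℤ) else -1 := by
  rw [← Finset.sum_filter_add_sum_filter_not S (fun k => σ k ∈ S)]
  have : (∑ k ∈ S with σ k ∈ S, if w k then (1:ℤ) else -1) = 0 := by
    apply Finset.sum_involution (fun k _ => σ k)
    · intro a _; rw [hw]; cases w a <;> simp
    · intro a _ _ h
      have := hw a; rw [h] at this; cases h' : w a <;> rw [h'] at this <;> simp at this
    · intro a ha; simp only [Finset.mem_filter] at ha ⊢; rw [hσ]; exact ⟨ha.2, ha.1⟩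
    · intro a _; exact hσ a
  rw [this, zero_add]

theorem exists_partner {n : ℕ} {P : Finset (Finset (Fin n))} (hP : IsPartition P)
    (hx : ∀ i, IsBlockMax P i ↔ ¬ IsBlockMin P i) (i : Fin n) :
    ∃ j, {i, j} ∈ P ∧ (IsBlockMin P i ↔ i < j) ∧ (IsBlockMin P j ↔ j < i) := by
  obtain ⟨t, ⟨ht, hit⟩, huniq⟩ := hP.2 i
  have key : ∀ k ∈ t, ∀ s ∈ P, k ∈ s → s = t := by
    intro k hk s hs hks
    exact (hP.2 k).unique ⟨hs, hks⟩ ⟨ht, hk⟩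
  have hmin : ∀ k ∈ t, (IsBlockMin P k ↔ ∀ j ∈ t, k ≤ j) := by
    intro k hk
    constructor
    · intro h; exact h t ht hk
    · intro h s hs hks; rw [key k hk s hs hks]; exact h
  have hmax : ∀ k ∈ t, (IsBlockMax P k ↔ ∀ j ∈ t, j ≤ k) := by
    intro k hk
    constructor
    · intro h; exact h t ht hk
    · intro h s hs hks; rw [key k hk s hs hks]; exact h
  have hne : t.Nonempty := ⟨i, hit⟩
  set a := t.min' hne with ha
  set b := t.max' hne with hb
  have hat : a ∈ t := t.min'_mem hne
  have hbt : b ∈ t := t.max'_mem hne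
  have hamin : IsBlockMin P a := (hmin a hat).2 fun j hj => t.min'_le j hj
  have hbmax : IsBlockMax P b := (hmax b hbt).2 fun j hj => t.le_max' j hj
  have hbmin : ¬ IsBlockMin P b := (hx b).1 hbmax
  have hab : a ≠ b := by intro h; rw [h] at hamin; exact hbmin hamin
  have hlt : a < b := lt_of_le_of_ne (t.min'_le b hbt) hab
  have hall : ∀ k ∈ t, k = a ∨ k = b := by
    intro k hk
    by_cases h : IsBlockMin P k
    · left; exact le_antisymm ((hmin k hk).1 h a hat) (t.min'_le k hk)
    · right; exact le_antisymm (t.le_max' k hk) ((hmax k hk).1 ((hx k).2 h) b hbt)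
  have hteq : t = {a, b} := by
    ext k; simp only [Finset.mem_insert, Finset.mem_singleton]
    constructor
    · exact hall k
    · rintro (h | h) <;> rw [h] <;> assumption
  rcases hall i hit with h | h
  · refine ⟨b, ?_, ?_, ?_⟩
    · rw [h, ← hteq]; exact ht
    · rw [h]; simp [hamin, hlt]
    · rw [h]; simp [hbmin, hlt.le]
  · refine ⟨a, ?_, ?_, ?_⟩
    · rw [h, Finset.pair_comm, ← hteq]; exact ht
    · rw [h]; simp [hbmin, hlt.le]
    · rw [h]; simp [hamin, hlt]

theorem partition_word {n : ℕ} {P : Finset (Finset (Fin n))} (hP : P ∈ NC n)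
    (hx : ∀ i, IsBlockMax P i ↔ ¬ IsBlockMin P i) :
    IsDyck (wordOf P) ∧ matching (wordOf P) = P := by
  simp only [NC, Finset.mem_filter, Finset.mem_univ, true_and] at hP
  obtain ⟨hPart, hNC⟩ := hP
  choose σ hσ1 hσ2 hσ3 using exists_partner hPart hx
  set w := wordOf P with hwdef
  have hw1 : ∀ i, w i = true ↔ i < σ i := by
    intro i; simp only [hwdef, wordOf, decide_eq_true_eq]; exact hσ2 i
  have hw2 : ∀ i, w (σ i) = true ↔ σ i < i := by
    intro i; simp only [hwdef, wordOf, decide_eq_true_eq]; exact hσ3 i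
  have hne : ∀ i, σ i ≠ i := by
    intro i h
    have h1 := hw1 i
    have h2 := hσ1 i
    rw [h] at h1 h2
    have h3 : IsBlockMin P i := by
      intro s hs his
      rw [(hPart.2 i).unique ⟨hs, his⟩ ⟨h2, by simp⟩]; simp
    simp [hwdef, wordOf, h3] at h1
  have hblock : ∀ i j, {i, j} ∈ P → j ≠ i → σ i = j := by
    intro i j h hji
    have := (hPart.2 i).unique ⟨h, by simp⟩ ⟨hσ1 i, by simp⟩
    have h2 : j ∈ ({i, σ i} : Finset (Fin n)) := by rw [← this]; simp
    simp only [Finset.mem_insert, Finset.mem_singleton] at h2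
    rcases h2 with h2 | h2
    · exact absurd h2 hji
    · exact h2.symm
  have hσ : ∀ i, σ (σ i) = i := fun i =>
    hblock _ _ (by rw [Finset.pair_comm]; exact hσ1 i) (hne i).symm
  have hw : ∀ i, w (σ i) = !(w i) := by
    intro i
    have h1 := hw1 i
    have h2 := hw2 i
    have h3 := hne i
    rcases lt_or_gt_of_ne h3 with h | h
    · rw [h2.2 h]
      have : w i ≠ true := fun hh => absurd (h1.1 hh) (not_lt.2 h.le)
      cases h' : w i
      · rfl
      · exact absurd h' this
    · rw [h1.2 h]
      have : w (σ i) ≠ true := fun hh => absurd (h2.1 hh) (not_lt.2 h.le)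
      cases h' : w (σ i)
      · rfl
      · exact absurd h' this
  have hcross : ∀ a b, a < b → b < σ a → σ a < σ b → False := by
    intro a b h1 h2 h3
    have := hNC a b (σ a) (σ b) h1 h2 h3 _ (hσ1 a) _ (hσ1 b) (by simp) (by simp) (by simp) (by simp)
    have h4 : b ∈ ({a, σ a} : Finset (Fin n)) := by rw [this]; simp
    simp only [Finset.mem_insert, Finset.mem_singleton] at h4
    omega
  have hDyck : IsDyck w := by
    constructor
    · intro i
      unfold hgt
      rw [sum_rest w σ hσ hw]
      apply Finset.sum_nonneg
      intro k hk
      simp only [Finset.mem_filter, Finset.mem_univ, true_and, not_lt] at hk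
      have : w k = true := by rw [hw1, Fin.lt_def]; omega
      simp [this]
    · unfold hgt
      rw [sum_rest w σ hσ hw]
      apply Finset.sum_eq_zero
      intro k hk
      simp at hk
  have hRel : ∀ i, i < σ i → Rel w i (σ i) := by
    intro i hi
    have hi' := hi
    rw [Fin.lt_def] at hi'
    refine ⟨hi, ?_, ?_⟩
    · rw [← sub_eq_zero, hgt_sub w _ _ (by omega), sum_rest w σ hσ hw]
      apply Finset.sum_eq_zero
      intro k hk
      exfalso
      simp only [Finset.mem_filter, Finset.mem_univ, true_and] at hk
      obtain ⟨⟨hk1, hk2⟩, hk3⟩ := hk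
      have hki : k ≠ i := by rintro rfl; omega
      have hki2 : k ≠ σ i := by rintro rfl; rw [hσ] at hk3; omega
      by_cases hlt : σ k < i
      · exact hcross (σ k) i hlt (by rw [hσ]; omega) (by rw [hσ]; omega)
      · exact hcross i k (by omega) (by omega) (by omega)
    · intro k hk1 hk2
      rw [← sub_pos, hgt_sub w _ _ hk1.le, sum_rest w σ hσ hw]
      apply Finset.sum_pos
      · intro l hl
        simp only [Finset.mem_filter, Finset.mem_univ, true_and] at hl
        obtain ⟨⟨hl1, hl2⟩, hl3⟩ := hl
        have : w l = true := by
          rw [hw1]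
          by_contra hcon
          have := hne l
          by_cases hli : l = i
          · subst hli; omega
          exact hcross (σ l) i (by omega) (by rw [hσ]; omega) (by rw [hσ]; omega)
        simp [this]
      · exact ⟨i, by simp; omega⟩
  refine ⟨hDyck, ?_⟩
  ext t
  rw [mem_matching]
  constructor
  · rintro ⟨i, j, hij, rfl⟩
    have h1 := (hw1 i).1 hij.left
    rw [hij.uniq_right (hRel i h1)]
    exact hσ1 i
  · intro ht
    obtain ⟨i, hi⟩ := hPart.1 t ht
    have : t = {i, σ i} := (hPart.2 i).unique ⟨ht, hi⟩ ⟨hσ1 i, by simp⟩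
    rcases lt_or_gt_of_ne (hne i) with h | h
    · refine ⟨σ i, i, ?_, by rw [this, Finset.pair_comm]⟩
      have := hRel (σ i) (by rw [hσ]; exact h)
      rwa [hσ] at this
    · exact ⟨i, σ i, hRel i h, this⟩

end OVFree

namespace OVFree

section Fold

variable {B M : Type*} [Ring B] [Algebra ℂ B] [Ring M] [Algebra ℂ M]

/-- close the innermost bracket -/
def closeTop (κ : List M → B) (ι : B →ₐ[ℂ] M) (ts : List M) (rest : List (List M)) (v : B) :
    List (List M) × B :=
  match rest with
  | [] => ([], v * κ ts.reverse)
  | us :: rest' => (closeArg ι (κ ts.reverse) us :: rest', v)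

/-- generic step -/
def gstep (κ : List M → B) (ι : B →ₐ[ℂ] M) (mn mx : Prop) (x : M) (s : List (List M) × B) :
    List (List M) × B :=
  let st₁ : List (List M) := if mn then [] :: s.1 else s.1
  let st₂ : List (List M) :=
    match st₁ with
    | [] => []
    | ts :: rest => (x :: ts) :: rest
  if mx then
    match st₂ with
    | [] => ([], s.2)
    | ts :: rest =>
        let b := κ ts.reverse
        match rest with
        | [] => ([], s.2 * b)
        | us :: rest' => (closeArg ι b us :: rest', s.2)
  else (st₂, s.2)

theorem bracketingStep_eq (κ : List M → B) (ι : B →ₐ[ℂ] M) {n : ℕ} (P : Finset (Finset (Fin n)))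
    (m : Fin n → M) (s : List (List M) × B) (i : Fin n) :
    bracketingStep κ ι P m s i = gstep κ ι (IsBlockMin P i) (IsBlockMax P i) (m i) s := rfl

theorem gstep_open (κ : List M → B) (ι : B →ₐ[ℂ] M) {mn mx : Prop} (h1 : mn) (h2 : ¬ mx) (x : M)
    (s : List (List M) × B) : gstep κ ι mn mx x s = ([x] :: s.1, s.2) := by
  simp [gstep, h1, h2]

theorem gstep_single (κ : List M → B) (ι : B →ₐ[ℂ] M) {mn mx : Prop} (h1 : mn) (h2 : mx) (x : M)
    (s : List (List M) × B) : gstep κ ι mn mx x s = closeTop κ ι [x] s.1 s.2 := by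
  obtain ⟨st, v⟩ := s
  cases st <;> simp [gstep, h1, h2, closeTop]

theorem gstep_mid (κ : List M → B) (ι : B →ₐ[ℂ] M) {mn mx : Prop} (h1 : ¬ mn) (h2 : ¬ mx) (x : M)
    (ts : List M) (rest : List (List M)) (v : B) :
    gstep κ ι mn mx x (ts :: rest, v) = ((x :: ts) :: rest, v) := by
  simp [gstep, h1, h2]

theorem gstep_close (κ : List M → B) (ι : B →ₐ[ℂ] M) {mn mx : Prop} (h1 : ¬ mn) (h2 : mx) (x : M)
    (ts : List M) (rest : List (List M)) (v : B) :
    gstep κ ι mn mx x (ts :: rest, v) = closeTop κ ι (x :: ts) rest v := by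
  cases rest <;> simp [gstep, h1, h2, closeTop]

theorem closeTop_length (κ : List M → B) (ι : B →ₐ[ℂ] M) (ts : List M) (rest : List (List M))
    (v : B) : (closeTop κ ι ts rest v).1.length = rest.length := by
  cases rest <;> simp [closeTop]

theorem fold_inv {S : Type*} {n : ℕ} (f : S → Fin n → S) (s0 : S) (I : ℕ → S → Prop)
    (h0 : I 0 s0) (hs : ∀ (i : Fin n) (s : S), I i s → I (i+1) (f s i)) :
    I n ((List.finRange n).foldl f s0) := by
  induction n generalizing I with
  | zero => simpa using h0
  | succ n ih =>
    rw [List.finRange_succ_last, List.foldl_append, List.foldl_map]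
    have := ih (fun s i => f s i.castSucc) I h0 (fun i s h => hs i.castSucc s h)
    exact hs (Fin.last n) _ this

/-- all collected arguments have the form `X b` -/
def GoodL (X : M) (ι : B →ₐ[ℂ] M) (st : List (List M)) : Prop :=
  ∀ l ∈ st, l ≠ [] ∧ ∀ a ∈ l, ∃ b, a = X * ι b

/-- the final value has to vanish -/
def Doomed (s : List (List M) × B) : Prop :=
  s.2 = 0 ∨ ∃ l ∈ s.1, (0 : M) ∈ l ∨ 2 ≤ l.length

theorem closeTop_good (κ : List M → B) {ι : B →ₐ[ℂ] M} {X : M} (ts : List M)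
    {rest : List (List M)} (v : B) (h : GoodL X ι rest) :
    GoodL X ι (closeTop κ ι ts rest v).1 := by
  cases rest with
  | nil => simp [closeTop, GoodL]
  | cons us r =>
    intro l hl
    simp only [closeTop, List.mem_cons] at hl
    rcases hl with rfl | hl
    · obtain ⟨hne, hus⟩ := h us (by simp)
      cases us with
      | nil => exact absurd rfl hne
      | cons a t =>
        refine ⟨by simp [closeArg], ?_⟩
        intro y hy
        simp only [closeArg, List.mem_cons] at hy
        rcases hy with rfl | hy
        · obtain ⟨b, rfl⟩ := hus a (by simp)
          exact ⟨b * κ ts.reverse, by rw [map_mul, mul_assoc]⟩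
        · exact hus y (by simp [hy])
    · exact h l (by simp [hl])

theorem closeTop_doomed (κ : List M → B) {ι : B →ₐ[ℂ] M} {X : M} (ts : List M)
    {rest : List (List M)} (v : B) (h : GoodL X ι rest)
    (hd : κ ts.reverse = 0 ∨ Doomed (rest, v)) :
    Doomed (closeTop κ ι ts rest v) := by
  cases rest with
  | nil =>
    left
    rcases hd with hd | hd
    · simp [closeTop, hd]
    · rcases hd with hd | ⟨l, hl, -⟩
      · simp only at hd; simp [closeTop, hd]
      · simp at hl
  | cons us r =>
    obtain ⟨hne, hus⟩ := h us (by simp)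
    obtain ⟨a, t, rfl⟩ := List.exists_cons_of_ne_nil hne
    rcases hd with hd | hd
    · right
      exact ⟨_, List.mem_cons_self, Or.inl (by simp [closeArg, hd])⟩
    · rcases hd with hd | ⟨l, hl, hl2⟩
      · exact Or.inl hd
      · right
        rcases List.mem_cons.1 hl with rfl | hl
        · refine ⟨_, List.mem_cons_self, ?_⟩
          rcases hl2 with h0 | h0
          · left
            rcases List.mem_cons.1 h0 with h0 | h0
            · simp [closeArg, ← h0]
            · simp [closeArg, h0]
          · right; simpa [closeArg] using h0
        · exact ⟨l, List.mem_cons_of_mem _ hl, hl2⟩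

/-- blocks open at time `k` -/
def openBlocks {n : ℕ} (P : Finset (Finset (Fin n))) (k : ℕ) : Finset (Finset (Fin n)) :=
  P.filter fun t => (∃ a ∈ t, a.val < k) ∧ ∃ a ∈ t, k ≤ a.val

theorem openBlocks_step {n : ℕ} {P : Finset (Finset (Fin n))} (hP : IsPartition P) (i : Fin n) :
    (IsBlockMin P i → IsBlockMax P i → (openBlocks P (i+1)).card = (openBlocks P i).card) ∧
    (IsBlockMin P i → ¬ IsBlockMax P i → (openBlocks P (i+1)).card = (openBlocks P i).card + 1) ∧
    (¬ IsBlockMin P i → 0 < (openBlocks P i).card) ∧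
    (¬ IsBlockMin P i → IsBlockMax P i → (openBlocks P (i+1)).card + 1 = (openBlocks P i).card) ∧
    (¬ IsBlockMin P i → ¬ IsBlockMax P i → (openBlocks P (i+1)).card = (openBlocks P i).card) := by
  obtain ⟨t, ⟨ht, hit⟩, huniq⟩ := hP.2 i
  have hmin : IsBlockMin P i ↔ ¬ ∃ a ∈ t, a.val < i.val := by
    push Not
    constructor
    · intro h a ha; exact h t ht hit a ha
    · intro h s hs his
      rw [huniq s ⟨hs, his⟩]; exact h
  have hmax : IsBlockMax P i ↔ ¬ ∃ a ∈ t, i.val + 1 ≤ a.val := by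
    push Not
    constructor
    · intro h a ha; have := h t ht hit a ha; rw [Fin.le_def] at this; omega
    · intro h s hs his
      rw [huniq s ⟨hs, his⟩]; intro a ha; have := h a ha; rw [Fin.le_def]; omega
  have h1 : t ∈ openBlocks P i ↔ ¬ IsBlockMin P i := by
    rw [hmin, not_not]
    simp only [openBlocks, Finset.mem_filter]
    exact ⟨fun h => h.2.1, fun h => ⟨ht, h, i, hit, le_rfl⟩⟩
  have h2 : t ∈ openBlocks P (i+1) ↔ ¬ IsBlockMax P i := by
    rw [hmax, not_not]
    simp only [openBlocks, Finset.mem_filter]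
    exact ⟨fun h => h.2.2, fun h => ⟨ht, ⟨i, hit, by omega⟩, h⟩⟩
  have h3 : (openBlocks P (i+1)).erase t = (openBlocks P i).erase t := by
    ext s
    simp only [openBlocks, Finset.mem_erase, Finset.mem_filter]
    refine and_congr_right fun hst => and_congr_right fun hs => ?_
    have hne : ∀ a ∈ s, a.val ≠ i.val := by
      intro a ha hai
      have : a = i := Fin.ext hai
      subst this
      exact hst (huniq s ⟨hs, ha⟩)
    constructor
    · rintro ⟨⟨a, ha, h⟩, b, hb, h'⟩
      exact ⟨⟨a, ha, by have := hne a ha; omega⟩, b, hb, by omega⟩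
    · rintro ⟨⟨a, ha, h⟩, b, hb, h'⟩
      exact ⟨⟨a, ha, by omega⟩, b, hb, by have := hne b hb; omega⟩
  have h4 := congrArg Finset.card h3
  refine ⟨fun a b => ?_, fun a b => ?_, fun a => ?_, fun a b => ?_, fun a b => ?_⟩
  · rwa [Finset.erase_eq_of_notMem (by rw [h2]; simpa using b),
      Finset.erase_eq_of_notMem (by rw [h1]; simpa using a)] at h4
  · rw [Finset.erase_eq_of_notMem (s := openBlocks P i) (by rw [h1]; simpa using a)] at h4
    rw [← h4, Finset.card_erase_add_one (h2.2 b)]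
  · exact Finset.card_pos.2 ⟨t, h1.2 a⟩
  · rw [Finset.erase_eq_of_notMem (s := openBlocks P (i+1)) (by rw [h2]; simpa using b)] at h4
    rw [h4, Finset.card_erase_add_one (h1.2 a)]
  · rw [← Finset.card_erase_add_one (h1.2 a), ← Finset.card_erase_add_one (h2.2 b), h4]

theorem bracketing_eq_zero {κ : List M → B} {ι : B →ₐ[ℂ] M} {X : M}
    (hz : ∀ l : List M, (0 : M) ∈ l → κ l = 0)
    (hx : ∀ l : List M, (∀ a ∈ l, ∃ b, a = X * ι b) → l ≠ [] → l.length ≠ 2 → κ l = 0)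
    {n : ℕ} {P : Finset (Finset (Fin n))} (hP : IsPartition P) (m : Fin n → M)
    (hm : ∀ i, ∃ b, m i = X * ι b)
    (hbad : ¬ ∀ i, IsBlockMax P i ↔ ¬ IsBlockMin P i) :
    bracketing κ ι P m = 0 := by
  have key := fold_inv (bracketingStep κ ι P m) ([], 1)
    (fun k s => s.1.length = (openBlocks P k).card ∧ GoodL X ι s.1 ∧
      ((∃ j : Fin n, j.val < k ∧ ¬ (IsBlockMax P j ↔ ¬ IsBlockMin P j)) → Doomed s))
    (by simp [openBlocks, GoodL]) ?_
  · obtain ⟨h1, -, h3⟩ := key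
    push Not at hbad
    have hbad' : ∃ j : Fin n, j.val < n ∧ ¬ (IsBlockMax P j ↔ ¬ IsBlockMin P j) := by
      obtain ⟨j, hj⟩ := hbad
      exact ⟨j, j.2, by tauto⟩
    have h0 : (openBlocks P n).card = 0 := by
      rw [Finset.card_eq_zero]
      ext t
      simp only [openBlocks, Finset.mem_filter, Finset.notMem_empty, iff_false]
      rintro ⟨-, -, a, -, ha⟩
      omega
    rw [h0, List.length_eq_zero_iff] at h1
    rcases h3 hbad' with h | ⟨l, hl, -⟩
    · exact h
    · rw [h1] at hl; simp at hl
  · rintro i ⟨st, v⟩ ⟨hlen, hgood, hdoom⟩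
    obtain ⟨e1, e2, e3, e4, e5⟩ := openBlocks_step hP i
    simp only at hlen hgood
    rw [bracketingStep_eq]
    have hprev : (IsBlockMax P i ↔ ¬ IsBlockMin P i) →
        (∃ j : Fin n, j.val < i.val + 1 ∧ ¬ (IsBlockMax P j ↔ ¬ IsBlockMin P j)) → Doomed (st, v) := by
      rintro hi ⟨j, hj, hj2⟩
      apply hdoom
      refine ⟨j, ?_, hj2⟩
      have : j ≠ i := by rintro rfl; exact hj2 hi
      have : j.val ≠ i.val := fun h => this (Fin.ext h)
      omega
    by_cases hmn : IsBlockMin P i <;> by_cases hmx : IsBlockMax P i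
    · rw [gstep_single κ ι hmn hmx]
      refine ⟨?_, closeTop_good κ _ v hgood, fun _ => closeTop_doomed κ _ v hgood (Or.inl ?_)⟩
      · rw [closeTop_length, e1 hmn hmx]; exact hlen
      · apply hx
        · simpa using hm i
        · simp
        · simp
    · rw [gstep_open κ ι hmn hmx]
      refine ⟨?_, ?_, ?_⟩
      · rw [e2 hmn hmx]; simp [hlen]
      · intro l hl
        rcases List.mem_cons.1 hl with rfl | hl
        · exact ⟨by simp, by simpa using hm i⟩
        · exact hgood l hl
      · intro h
        rcases hprev ⟨fun h => absurd h hmx, fun h => absurd hmn h⟩ h with h | ⟨l, hl, hl2⟩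
        · exact Or.inl h
        · exact Or.inr ⟨l, List.mem_cons_of_mem _ hl, hl2⟩
    · have hpos := e3 hmn
      cases st with
      | nil => simp at hlen; omega
      | cons ts rest =>
        rw [gstep_close κ ι hmn hmx]
        have hg' : GoodL X ι rest := fun l hl => hgood l (List.mem_cons_of_mem _ hl)
        obtain ⟨hts, hts2⟩ := hgood ts (by simp)
        have hall : ∀ a ∈ (m i :: ts).reverse, ∃ b, a = X * ι b := by
          intro a ha
          rw [List.mem_reverse] at ha
          rcases List.mem_cons.1 ha with rfl | ha
          · exact hm i
          · exact hts2 a ha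
        refine ⟨?_, closeTop_good κ _ v hg', fun h => closeTop_doomed κ _ v hg' ?_⟩
        · rw [closeTop_length]
          have := e4 hmn hmx
          simp at hlen
          omega
        · rcases hprev ⟨fun _ => hmn, fun _ => hmx⟩ h with h | ⟨l, hl, hl2⟩
          · exact Or.inr (Or.inl h)
          · rcases List.mem_cons.1 hl with rfl | hl
            · left
              rcases hl2 with h0 | h0
              · apply hz; simp [h0]
              · apply hx _ hall
                · simp
                · simp; omega
            · exact Or.inr (Or.inr ⟨l, hl, hl2⟩)
    · have hpos := e3 hmn
      cases st with
      | nil => simp at hlen; omega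
      | cons ts rest =>
        rw [gstep_mid κ ι hmn hmx]
        obtain ⟨hts, hts2⟩ := hgood ts (by simp)
        have hl1 := List.length_pos_iff.2 hts
        refine ⟨?_, ?_, ?_⟩
        · rw [e5 hmn hmx, ← hlen]; simp
        · intro l hl
          rcases List.mem_cons.1 hl with rfl | hl
          · refine ⟨by simp, ?_⟩
            intro a ha
            rcases List.mem_cons.1 ha with rfl | ha
            · exact hm i
            · exact hts2 a ha
          · exact hgood l (List.mem_cons_of_mem _ hl)
        · intro _
          exact Or.inr ⟨_, List.mem_cons_self, Or.inr (by simp; omega)⟩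

/-- value of a word -/
def wordVal (κ : List M → B) (ι : B →ₐ[ℂ] M) {n : ℕ} (m : Fin n → M) (w : Fin n → Bool) : B :=
  ((List.finRange n).foldl
    (fun s i => gstep κ ι (w i = true) (w i = false) (m i) s) ([], 1)).2

theorem sum_NC {κ : List M → B} {ι : B →ₐ[ℂ] M} {X : M}
    (hz : ∀ l : List M, (0 : M) ∈ l → κ l = 0)
    (hx : ∀ l : List M, (∀ a ∈ l, ∃ b, a = X * ι b) → l ≠ [] → l.length ≠ 2 → κ l = 0)
    {n : ℕ} (m : Fin n → M) (hm : ∀ i, ∃ b, m i = X * ι b) :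
    ∑ P ∈ NC n, bracketing κ ι P m = ∑ w : Fin n → Bool with IsDyck w, wordVal κ ι m w := by
  have h1 : ∑ P ∈ NC n, bracketing κ ι P m =
      ∑ P ∈ NC n with (∀ i, IsBlockMax P i ↔ ¬ IsBlockMin P i), bracketing κ ι P m := by
    symm
    apply Finset.sum_subset (Finset.filter_subset _ _)
    intro P hP hP2
    apply bracketing_eq_zero hz hx _ m hm
    · intro h; exact hP2 (Finset.mem_filter.2 ⟨hP, h⟩)
    · simp only [NC, Finset.mem_filter, Finset.mem_univ, true_and] at hP
      exact hP.1
  rw [h1]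
  apply Finset.sum_bij' (fun P _ => wordOf P) (fun w _ => matching w)
  · intro P hP
    rw [Finset.mem_filter] at hP
    simpa using (partition_word hP.1 hP.2).1
  · intro w hw
    simp only [Finset.mem_filter, Finset.mem_univ, true_and] at hw
    rw [Finset.mem_filter]
    refine ⟨matching_mem_NC hw, fun i => ?_⟩
    rw [matching_min hw, matching_max hw]; simp
  · intro P hP
    rw [Finset.mem_filter] at hP
    exact (partition_word hP.1 hP.2).2
  · intro w hw
    simp only [Finset.mem_filter, Finset.mem_univ, true_and] at hw
    funext i
    rw [Bool.eq_iff_iff, wordOf, decide_eq_true_eq, matching_min hw]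
  · intro P hP
    rw [Finset.mem_filter] at hP
    unfold bracketing wordVal
    congr 2
    funext s i
    rw [bracketingStep_eq]
    have e1 : (wordOf P i = true) = IsBlockMin P i := by simp [wordOf]
    have e2 : (wordOf P i = false) = IsBlockMax P i := by
      rw [hP.2 i]; simp [wordOf]
    rw [e1, e2]

end Fold

/-! counting Dyck words -/

theorem sum_dyck_list (l : List DyckStep) :
    (l.map fun s => if s = DyckStep.U then (1:ℤ) else -1).sum =
      (l.count DyckStep.U : ℤ) - l.count DyckStep.D := by
  induction l with
  | nil => simp
  | cons a l ih =>
    cases a <;> simp [ih] <;> ring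

/-- the list of Dyck steps of a word -/
def toSteps {n : ℕ} (w : Fin n → Bool) : List DyckStep :=
  List.ofFn fun i => if w i then DyckStep.U else DyckStep.D

theorem hgt_eq_count {n : ℕ} (w : Fin n → Bool) (i : ℕ) :
    hgt w i = (((toSteps w).take i).count DyckStep.U : ℤ) - ((toSteps w).take i).count DyckStep.D := by
  rw [← sum_dyck_list, List.map_take, toSteps, List.map_ofFn, List.sum_take_ofFn]
  unfold hgt
  apply Finset.sum_congr rfl
  intro k _
  cases h : w k <;> simp [h]

theorem hgt_ge {n : ℕ} (w : Fin n → Bool) (i : ℕ) (hi : n ≤ i) : hgt w i = hgt w n := by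
  unfold hgt
  congr 1; ext k; simp; omega

theorem count_add (l : List DyckStep) : l.count DyckStep.U + l.count DyckStep.D = l.length := by
  induction l with
  | nil => simp
  | cons a l ih => cases a <;> simp <;> omega

theorem card_dyck (k : ℕ) :
    (Finset.univ.filter fun w : Fin (2*k) → Bool => IsDyck w).card = catalan k := by
  rw [← DyckWord.card_dyckWord_semilength_eq_catalan k, ← Fintype.card_subtype]
  have hU : ∀ w : Fin (2*k) → Bool, IsDyck w →
      (toSteps w).count DyckStep.U = (toSteps w).count DyckStep.D := by
    intro w hw
    have := hgt_eq_count w (2*k)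
    rw [hw.2, List.take_of_length_le (by simp [toSteps])] at this
    omega
  let f : {w : Fin (2*k) → Bool // IsDyck w} → {p : DyckWord // p.semilength = k} := fun w =>
    ⟨⟨toSteps w.1, hU w.1 w.2, by
        intro i
        have := hgt_eq_count w.1 i
        have h0 : 0 ≤ hgt w.1 i := by
          by_cases hi : i < 2*k+1
          · exact w.2.1 ⟨i, hi⟩
          · rw [hgt_ge _ _ (by omega), w.2.2]
        omega⟩, by
      have h1 := hU w.1 w.2
      have h2 := count_add (toSteps w.1)
      have h3 : (toSteps w.1).length = 2*k := by simp [toSteps]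
      show (toSteps w.1).count DyckStep.U = k
      omega⟩
  have hf : Function.Bijective f := by
    constructor
    · intro w w' h
      have h1 : toSteps w.1 = toSteps w'.1 := congrArg (fun p => p.1.toList) h
      apply Subtype.ext
      funext i
      have := congrFun (List.ofFn_injective h1) i
      cases h : w.1 i <;> cases h' : w'.1 i <;> simp [h, h'] at this ⊢
    · rintro ⟨p, hp⟩
      have hlen : p.toList.length = 2*k := by
        have h1 := count_add p.toList
        have h2 := p.count_U_eq_count_D
        have h3 : p.toList.count DyckStep.U = k := hp
        omega
      let w : Fin (2*k) → Bool := fun i => decide (p.toList[i.val]'(by omega) = DyckStep.U)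
      have hw : toSteps w = p.toList := by
        apply List.ext_getElem
        · simp [toSteps, hlen]
        · intro i h1 h2
          simp only [toSteps, List.getElem_ofFn, w, decide_eq_true_eq]
          rcases DyckStep.dichotomy p.toList[i] with h | h <;> simp [h]
      refine ⟨⟨w, ?_, ?_⟩, ?_⟩
      · intro i
        rw [hgt_eq_count, hw]
        have := p.count_D_le_count_U i
        omega
      · rw [hgt_eq_count, hw, List.take_of_length_le (by omega)]
        have := p.count_U_eq_count_D
        omega
      · apply Subtype.ext
        apply DyckWord.ext
        exact hw
  exact Fintype.card_congr (Equiv.ofBijective f hf)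

end OVFree

namespace OVFree

theorem dyck_even {n : ℕ} {w : Fin n → Bool} (hw : IsDyck w) : Even n := by
  have h1 := hgt_eq_count w n
  have h2 := count_add (toSteps w)
  have h3 : (toSteps w).length = n := by simp [toSteps]
  rw [hw.2, List.take_of_length_le (by omega)] at h1
  exact ⟨(toSteps w).count DyckStep.U, by omega⟩

theorem dyck_two : ∀ w : Fin 2 → Bool, IsDyck w ↔ w = ![true, false] := by
  unfold IsDyck hgt
  decide

theorem dyck_four : ∀ w : Fin 4 → Bool, IsDyck w ↔
    (w = ![true, true, false, false] ∨ w = ![true, false, true, false]) := by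
  unfold IsDyck hgt
  decide

section Eval

variable {B M : Type*} [Ring B] [Algebra ℂ B] [Ring M] [Algebra ℂ M]

theorem kappa_zero {ι : B →ₐ[ℂ] M} (κ : MultiplicativeMap ι) (l : List M) (h : (0 : M) ∈ l) :
    κ.toFun l = 0 := by
  obtain ⟨s, t, rfl⟩ := List.append_of_mem h
  have := κ.map_smul s 0 0 t
  simpa using this

theorem kappa_vanish {ι : B →ₐ[ℂ] M} (κ : MultiplicativeMap ι) {X : M}
    (hX : ∀ (p : ℕ), p ≠ 1 → ∀ b : Fin p → B,
      κ.toFun (((List.finRange p).map fun j => X * ι (b j)) ++ [X]) = 0)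
    (l : List M) (hl : ∀ a ∈ l, ∃ b, a = X * ι b) (hne : l ≠ []) (hlen : l.length ≠ 2) :
    κ.toFun l = 0 := by
  rcases List.eq_nil_or_concat l with rfl | ⟨l', a, rfl⟩
  · exact absurd rfl hne
  rw [List.concat_eq_append] at *
  obtain ⟨b, rfl⟩ := hl a (by simp)
  rw [κ.B_right]
  have h2 : ∀ j : Fin l'.length, ∃ b, l'[j] = X * ι b := fun j => hl _ (by simp)
  choose b' hb' using h2
  have h3 : l' = (List.finRange l'.length).map fun j => X * ι (b' j) := by
    apply List.ext_getElem
    · simp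
    · intro i h1 h2
      have := hb' ⟨i, h1⟩
      simpa using this
  have h4 := hX l'.length (by simp at hlen; omega) b'
  rw [← h3] at h4
  rw [h4, zero_mul]

theorem wordVal_scalar {ι : B →ₐ[ℂ] M} (κ : MultiplicativeMap ι) {X : M} {c : ℂ}
    (hc : κ.toFun [X, X] = c • 1) {n : ℕ} {w : Fin n → Bool} (hw : IsDyck w) :
    ∃ e, 2 * e = n ∧ wordVal κ.toFun ι (fun _ => X) w = c ^ e • 1 := by
  have key := fold_inv
    (fun (s : List (List M) × B) (i : Fin n) => gstep κ.toFun ι (w i = true) (w i = false) X s) ([], 1)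
    (fun k s => ∃ (ds : List ℂ) (d0 : ℂ) (e : ℕ), s.1 = ds.map (fun d => [d • X]) ∧ s.2 = d0 • 1 ∧
      d0 * ds.prod = c ^ e ∧ 2 * e + ds.length = k ∧ (ds.length : ℤ) = hgt w k)
    ⟨[], 1, 0, by simp [hgt_zero]⟩ ?_
  · obtain ⟨ds, d0, e, h1, h2, h3, h4, h5⟩ := key
    rw [hw.2] at h5
    have : ds = [] := by rw [← List.length_eq_zero_iff]; omega
    subst this
    refine ⟨e, by simpa using h4, ?_⟩
    unfold wordVal
    rw [h2, ← h3]; simp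
  · rintro i ⟨st, v⟩ ⟨ds, d0, e, h1, h2, h3, h4, h5⟩
    simp only at h1 h2
    have hs := hgt_succ w i
    have h0 := hw.1 ⟨i+1, by omega⟩
    simp only at h0
    cases hwi : w i
    · rw [hwi] at hs
      simp only [Bool.false_eq_true, if_false] at hs
      cases ds with
      | nil => simp at h5; omega
      | cons d ds =>
        subst h1 h2
        simp only [List.map_cons]
        rw [gstep_close κ.toFun ι (by simp) (by simp)]
        have hk : κ.toFun ([X, d • X].reverse) = (d * c) • 1 := by
          have := κ.map_smul [] d X [X]
          simp only [List.nil_append] at this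
          simp only [List.reverse_cons, List.reverse_nil, List.nil_append, List.cons_append]
          rw [this, hc, smul_smul]
        simp only [List.prod_cons, List.length_cons] at h3 h4 h5
        cases ds with
        | nil =>
          refine ⟨[], d0 * (d * c), e + 1, ?_, ?_, ?_, ?_, ?_⟩
          · simp [closeTop]
          · simp only [closeTop, List.map_nil, hk]
            rw [smul_mul_smul_comm, one_mul]
          · rw [pow_succ, ← h3]; simp; ring
          · simp at h4 ⊢; omega
          · simp at h5 ⊢; omega
        | cons d' ds =>
          refine ⟨(d' * (d * c)) :: ds, d0, e + 1, ?_, ?_, ?_, ?_, ?_⟩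
          · simp only [closeTop, List.map_cons, closeArg, hk]
            rw [map_smul, map_one, smul_mul_smul_comm, mul_one]
          · simp [closeTop]
          · rw [pow_succ, ← h3]; simp; ring
          · simp at h4 ⊢; omega
          · simp at h5 ⊢; omega
    · rw [hwi] at hs
      simp only [if_true] at hs
      rw [gstep_open κ.toFun ι rfl (by simp)]
      refine ⟨1 :: ds, d0, e, ?_, h2, ?_, ?_, ?_⟩
      · simp [h1]
      · simpa using h3
      · simp; omega
      · simp; omega

theorem moment_words {ι : B →ₐ[ℂ] M} {E : M →ₗ[ℂ] B} (κ : MultiplicativeMap ι)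
    (hκ : IsCumulantMap ι E κ) {X : M}
    (hX : ∀ (p : ℕ), p ≠ 1 → ∀ b : Fin p → B,
      κ.toFun (((List.finRange p).map fun j => X * ι (b j)) ++ [X]) = 0)
    {n : ℕ} (hn : 0 < n) (m : Fin n → M) (hm : ∀ i, ∃ b, m i = X * ι b) :
    E (((List.finRange n).map m).prod) = ∑ w : Fin n → Bool with IsDyck w, wordVal κ.toFun ι m w := by
  rw [hκ n m hn]
  exact sum_NC (kappa_zero κ) (kappa_vanish κ hX) m hm

theorem moment_two {ι : B →ₐ[ℂ] M} {E : M →ₗ[ℂ] B} (κ : MultiplicativeMap ι)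
    (hκ : IsCumulantMap ι E κ) {X : M}
    (hX : ∀ (p : ℕ), p ≠ 1 → ∀ b : Fin p → B,
      κ.toFun (((List.finRange p).map fun j => X * ι (b j)) ++ [X]) = 0) (b : B) :
    E (X * ι b * X) = κ.toFun [X * ι b, X] := by
  have h := moment_words κ hκ hX (n := 2) (by norm_num) ![X * ι b, X] (by
    intro i; fin_cases i
    · exact ⟨b, rfl⟩
    · exact ⟨1, by simp⟩)
  have hf : (Finset.univ.filter fun w : Fin 2 → Bool => IsDyck w) = {![true, false]} := by
    ext w; simp [dyck_two]
  rw [hf, Finset.sum_singleton] at h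
  simpa [wordVal, List.finRange_succ, gstep] using h

theorem moment_four {ι : B →ₐ[ℂ] M} {E : M →ₗ[ℂ] B} (κ : MultiplicativeMap ι)
    (hκ : IsCumulantMap ι E κ) {X : M}
    (hX : ∀ (p : ℕ), p ≠ 1 → ∀ b : Fin p → B,
      κ.toFun (((List.finRange p).map fun j => X * ι (b j)) ++ [X]) = 0) :
    E (X ^ 4) = κ.toFun [X * ι (κ.toFun [X, X]), X] + κ.toFun [X, X] * κ.toFun [X, X] := by
  have h := moment_words κ hκ hX (n := 4) (by norm_num) (fun _ => X) (fun _ => ⟨1, by simp⟩)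
  have hf : (Finset.univ.filter fun w : Fin 4 → Bool => IsDyck w) =
      {![true, true, false, false], ![true, false, true, false]} := by
    ext w; simp [dyck_four]
  rw [hf, Finset.sum_pair (by decide)] at h
  have e1 : wordVal κ.toFun ι (fun _ => X) ![true, true, false, false] =
      κ.toFun [X * ι (κ.toFun [X, X]), X] := by
    simp [wordVal, List.finRange_succ, gstep, closeArg]
  have e2 : wordVal κ.toFun ι (fun _ => X) ![true, false, true, false] =
      κ.toFun [X, X] * κ.toFun [X, X] := by
    simp [wordVal, List.finRange_succ, gstep]
  rw [e1, e2] at h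
  rw [← h]
  congr 1
  rw [List.map_const', List.prod_replicate, List.length_finRange]

theorem moment_scalar {ι : B →ₐ[ℂ] M} {E : M →ₗ[ℂ] B} (κ : MultiplicativeMap ι)
    (hκ : IsCumulantMap ι E κ) {X : M}
    (hX : ∀ (p : ℕ), p ≠ 1 → ∀ b : Fin p → B,
      κ.toFun (((List.finRange p).map fun j => X * ι (b j)) ++ [X]) = 0) {c : ℂ}
    (hc : E (X ^ 2) = c • 1) (n : ℕ) (hn : 0 < n) :
    (∀ j, n = 2 * j + 1 → E (X ^ n) = 0) ∧
    (∀ j, n = 2 * j → E (X ^ n) = ((catalan j : ℂ) * c ^ j) • 1) := by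
  have h := moment_words κ hκ hX hn (fun _ => X) (fun _ => ⟨1, by simp⟩)
  have hp : ((List.finRange n).map (fun _ => X)).prod = X ^ n := by simp
  have hc' : κ.toFun [X, X] = c • 1 := by
    have := moment_two κ hκ hX 1
    rw [← hc, sq]; simpa using this.symm
  rw [hp] at h
  constructor
  · intro j hj
    rw [h]
    apply Finset.sum_eq_zero
    intro w hw
    have := dyck_even (by simpa using hw)
    rw [hj] at this
    exact absurd this (by simp)
  · rintro j rfl
    have : ∀ w ∈ (Finset.univ.filter fun w : Fin (2*j) → Bool => IsDyck w),
        wordVal κ.toFun ι (fun _ => X) w = c ^ j • (1 : B) := by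
      intro w hw
      obtain ⟨e, he, h⟩ := wordVal_scalar κ hc' (w := w) (by simpa using hw)
      rw [h, show e = j by omega]
    rw [h, Finset.sum_congr rfl this, Finset.sum_const, card_dyck, mul_smul, Nat.cast_smul_eq_nsmul]

end Eval

end OVFree

/-- Let `M` and `B` be unital C*-algebras, `ι : B → M` the inclusion of
`B` as a unital C*-subalgebra, `E : M → B` a positive conditional expectation and
`F : B → ℂ` a faithful state such that `τ = F∘E` is a faithful trace on `M`.  Let
`X = X* ∈ M` be `B`-semicircular (its `B`-valued cumulant series, w.r.t. the cumulant map
`κ` of `(M, E)`, vanishes except in order two).  Then the distribution of `X` with respect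
to `τ` is a semicircle law — i.e. there is `r ≥ 0` with `τ(Xᵏ) = ∫ tᵏ dν_r(t)` for all
`k ≥ 1` — iff `E(X²) ∈ ℂ·1`. -/
theorem semicircular_scalar_distribution_iff_constant_variance
    {B M : Type*}
    [NormedRing M] [StarRing M] [CStarRing M] [NormedAlgebra ℂ M] [StarModule ℂ M]
    [CompleteSpace M]
    [NormedRing B] [StarRing B] [CStarRing B] [NormedAlgebra ℂ B] [StarModule ℂ B]
    [CompleteSpace B] [PartialOrder B] [StarOrderedRing B]
    (ι : B →⋆ₐ[ℂ] M) (hι : Function.Injective ι)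
    (E : M →ₗ[ℂ] B) (hE : IsCondExp ι.toAlgHom E)
    (hEpos : ∀ m : M, 0 ≤ E (star m * m))
    (hEstar : ∀ m : M, E (star m) = star (E m))
    (F : B →ₗ[ℂ] ℂ) (hF1 : F 1 = 1)
    (hFpos : ∀ b : B, 0 ≤ F (star b * b))
    (hFfaithful : ∀ b : B, F (star b * b) = 0 → b = 0)
    (htrace : ∀ x y : M, F (E (x * y)) = F (E (y * x)))
    (hτfaithful : ∀ x : M, F (E (star x * x)) = 0 → x = 0)
    (κ : MultiplicativeMap ι.toAlgHom) (hκ : IsCumulantMap ι.toAlgHom E κ)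
    (X : M) (hXsa : IsSelfAdjoint X)
    (hXsemicirc : ∀ (p : ℕ), p ≠ 1 → ∀ b : Fin p → B,
      κ.toFun (((List.finRange p).map fun j => X * ι (b j)) ++ [X]) = 0) :
    (∃ r : ℝ, 0 ≤ r ∧ ∀ k : ℕ, 1 ≤ k →
        F (E (X ^ k)) = ((∫ t, t ^ k ∂(semicircleLaw r) : ℝ) : ℂ))
      ↔ ∃ c : ℂ, E (X ^ 2) = c • 1 := by
  have hXs : star X = X := hXsa
  have hX' : ∀ (p : ℕ), p ≠ 1 → ∀ b : Fin p → B,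
      κ.toFun (((List.finRange p).map fun j => X * ι.toAlgHom (b j)) ++ [X]) = 0 := hXsemicirc
  have hmono : ∀ b : B, 0 ≤ b → 0 ≤ F b := by
    intro b hb
    rw [StarOrderedRing.nonneg_iff] at hb
    induction hb using AddSubmonoid.closure_induction with
    | mem x hx => obtain ⟨s, rfl⟩ := hx; exact hFpos s
    | zero => simp
    | add x y _ _ hx hy => rw [map_add]; exact add_nonneg hx hy
  constructor
  · rintro ⟨r, hr, h⟩
    refine ⟨(r : ℂ), ?_⟩
    have h2 := h 2 (by norm_num)
    have h4 := h 4 (by norm_num)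
    have i2 := sc_even r hr 1
    have i4 := sc_even r hr 2
    norm_num [catalan_two] at i2 i4
    rw [i2] at h2
    rw [i4] at h4
    have hk : κ.toFun [X, X] = E (X ^ 2) := by
      have := moment_two κ hκ hX' 1
      rw [sq]; simpa using this.symm
    set a := E (X ^ 2) with ha
    have hsa : star a = a := by
      rw [ha, ← hEstar, star_pow, hXs]
    have hm4 := moment_four κ hκ hX'
    rw [hk, ← moment_two κ hκ hX' a] at hm4
    have htr : F (E (X * ι.toAlgHom a * X)) = F (a * a) := by
      rw [htrace, ← mul_assoc, ← sq]
      have := hE.2 1 a (X ^ 2)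
      rw [map_one, one_mul, one_mul] at this
      rw [this]
    rw [hm4, map_add, htr] at h4
    have h0 : a - (r : ℂ) • (1 : B) = 0 := by
      apply hFfaithful
      have : star (a - (r : ℂ) • (1 : B)) = a - (r : ℂ) • (1 : B) := by
        rw [star_sub, star_smul, star_one, hsa]; simp
      rw [this]
      have hexp : (a - (r : ℂ) • (1 : B)) * (a - (r : ℂ) • (1 : B)) =
          a * a - (2 * (r : ℂ)) • a + ((r : ℂ) * r) • (1 : B) := by
        rw [sub_mul, mul_sub, mul_sub, smul_mul_smul_comm, mul_smul_comm, smul_mul_assoc, mul_one,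
          one_mul, mul_one, two_mul, add_smul]
        abel
      rw [hexp, map_add, map_sub, map_smul, map_smul, h2, hF1]
      simp only [smul_eq_mul]
      push_cast at h4
      linear_combination h4 / 2
    exact sub_eq_zero.1 h0
  · rintro ⟨c, hc⟩
    have hc0 : 0 ≤ c := by
      have := hmono _ (hEpos X)
      rw [hXs, ← sq, hc, map_smul, hF1] at this
      simpa using this
    obtain ⟨r, hr, rfl⟩ : ∃ r : ℝ, 0 ≤ r ∧ (r : ℂ) = c := by
      rw [Complex.le_def] at hc0
      exact ⟨c.re, by simpa using hc0.1, Complex.ext (by simp) (by simpa using hc0.2)⟩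
    refine ⟨r, hr, ?_⟩
    intro k hk
    obtain ⟨h1, h2⟩ := moment_scalar κ hκ hX' hc k hk
    rcases Nat.even_or_odd' k with ⟨j, hj | hj⟩
    · rw [h2 j hj, hj, sc_even r hr, map_smul, hF1]
      simp
    · rw [h1 j hj, hj, sc_odd r hr]
      simp
end
end

section
/- Let M be a unital complex algebra, N ⊆ M a subalgebra, and B ⊆ C ⊆ D ⊆ M unital subalgebras, with conditional expectations E_B : M → B, E_C : M → C, E_D : M → D satisfying E_B = E_B∘E_C and E_C = E_C∘E_D. Assume the faithfulness conditions: (i) if c ∈ C and E_B(c c′) = 0 for all c′ ∈ C, then c = 0; (ii) if d ∈ D and E_C(d d′) = 0 for all d′ ∈ D, then d = 0; (iii) if m ∈ M and E_D(m m′) = 0 for all m′ ∈ M, then m = 0. If N is free from C with amalgamation over B (with respect to E_B) and N is free from D with amalgamation over C (with respect to E_C), then N is free from D with amalgamation over B (with respect to E_B). -/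
open scoped Classical

noncomputable section

open OVFree

section Helpers

variable {M : Type*} [Ring M] [Algebra ℂ M]

/-- Alternating products ending in the first algebra kill right multiplication by `C`. -/
theorem aux_run_true (A B C : Subalgebra ℂ M) (hBC : B ≤ C) (EB : M →ₗ[ℂ] M)
    (hEBr : ∀ m, EB m ∈ B) (hEB1 : EB 1 = 1)
    (hEBbi : ∀ b ∈ B, ∀ b' ∈ B, ∀ m : M, EB (b * m * b') = b * EB m * b')
    (hNC : FreeWithAmalgamation (fun m => EB m) A C)
    (r : List (M × Bool)) (hne : r ≠ [])
    (hch : r.IsChain (fun p q : M × Bool => p.2 ≠ q.2))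
    (hr : ∀ p ∈ r, p.1 ∈ (if p.2 then A else C) ∧ EB p.1 = 0)
    (hlast : ∀ a ∈ r.getLast?, a.2 = true) (c : M) (hc : c ∈ C) :
    EB ((r.map Prod.fst).prod * c) = 0 := by
  have hb : ∀ b ∈ B, EB b = b := by
    intro b hb
    have := hEBbi b hb 1 B.one_mem 1
    simpa [hEB1] using this
  have e : (r.map Prod.fst).prod * c =
      ((r ++ [(c - EB c, false)]).map Prod.fst).prod + 1 * (r.map Prod.fst).prod * EB c := by
    simp [mul_sub]
  rw [e, map_add, hEBbi 1 B.one_mem _ (hEBr c)]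
  have h1 : EB (r.map Prod.fst).prod = 0 := hNC r hne hch hr
  have h2 : EB ((r ++ [(c - EB c, false)]).map Prod.fst).prod = 0 := by
    apply hNC
    · simp
    · refine List.isChain_append.2 ⟨hch, by simp, ?_⟩
      intro x hx y hy
      simp at hy
      subst hy
      simp [hlast x hx]
    · intro p hp
      rcases List.mem_append.1 hp with hp | hp
      · exact hr p hp
      · simp at hp
        subst hp
        refine ⟨by simpa using C.sub_mem hc (hBC (hEBr c)), ?_⟩
        simp [hb _ (hEBr c)]
  rw [h1, h2]; simp

theorem aux_run (A B C : Subalgebra ℂ M) (hBC : B ≤ C) (EB : M →ₗ[ℂ] M)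
    (hEBr : ∀ m, EB m ∈ B) (hEB1 : EB 1 = 1)
    (hEBbi : ∀ b ∈ B, ∀ b' ∈ B, ∀ m : M, EB (b * m * b') = b * EB m * b')
    (hNC : FreeWithAmalgamation (fun m => EB m) A C)
    (r : List (M × Bool))
    (hch : r.IsChain (fun p q : M × Bool => p.2 ≠ q.2))
    (hr : ∀ p ∈ r, p.1 ∈ (if p.2 then A else C) ∧ EB p.1 = 0)
    (hex : ∃ a ∈ r, a.2 = true) (c : M) (hc : c ∈ C) :
    EB ((r.map Prod.fst).prod * c) = 0 := by
  rcases List.eq_nil_or_concat r with rfl | ⟨r', a, rfl⟩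
  · simp at hex
  rw [List.concat_eq_append] at *
  obtain ⟨a, t⟩ := a
  cases t with
  | true =>
    exact aux_run_true A B C hBC EB hEBr hEB1 hEBbi hNC _ (by simp) hch hr (by simp) c hc
  | false =>
    have hch' := List.isChain_append.1 hch
    have e : ((r' ++ [(a, false)]).map Prod.fst).prod * c =
      (r'.map Prod.fst).prod * (a * c) := by simp [mul_assoc]
    rw [e]
    have ha := (hr (a, false) (by simp)).1
    refine aux_run_true A B C hBC EB hEBr hEB1 hEBbi hNC r' ?_ hch'.1
      (fun p hp => hr p (by simp [hp])) ?_ _ (C.mul_mem (by simpa using ha) hc)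
    · rintro rfl
      simp at hex
    · intro x hx
      have := hch'.2.2 x hx (a, false) (by simp)
      simpa using this

/-- Products of runs in `A, C` separated by `EC`-centered elements of `D`. -/
theorem aux_pure (A A' C D : Subalgebra ℂ M) (EB EC : M →ₗ[ℂ] M)
    (hA : A ≤ A') (hC : C ≤ A')
    (hND : FreeWithAmalgamation (fun m => EC m) A' D)
    (hrun : ∀ r : List (M × Bool), r.IsChain (fun p q : M × Bool => p.2 ≠ q.2) →
      (∀ p ∈ r, p.1 ∈ (if p.2 then A else C) ∧ EB p.1 = 0) →
      (∃ a ∈ r, a.2 = true) → EC (r.map Prod.fst).prod = 0)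
    (L : List (M × Bool)) :
    ∀ (W r : List (M × Bool)),
    (∀ p ∈ L, (p.1 ∈ (if p.2 then A else C) ∧ EB p.1 = 0) ∨
        (p.2 = false ∧ p.1 ∈ D ∧ EC p.1 = 0)) →
    (∀ p ∈ r, p.1 ∈ (if p.2 then A else C) ∧ EB p.1 = 0) →
    (∀ p ∈ W, p.1 ∈ (if p.2 then A' else D) ∧ EC p.1 = 0) →
    W.IsChain (fun p q : M × Bool => p.2 ≠ q.2) →
    (∀ a ∈ W.getLast?, a.2 = false) →
    (r ++ L).IsChain (fun p q : M × Bool => p.2 ≠ q.2) →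
    (W ≠ [] → ∀ a ∈ (r ++ L).head?, a.2 = true) →
    (W ≠ [] ∨ (∃ a ∈ r ++ L, a.2 = true) ∨ ∃ a ∈ L, a.2 = false ∧ a.1 ∈ D ∧ EC a.1 = 0) →
    EC ((W.map Prod.fst).prod * (r.map Prod.fst).prod * (L.map Prod.fst).prod) = 0 := by
  have hmem : ∀ r : List (M × Bool),
      (∀ p ∈ r, p.1 ∈ (if p.2 then A else C) ∧ EB p.1 = 0) → (r.map Prod.fst).prod ∈ A' := by
    intro r hr
    apply Subalgebra.list_prod_mem
    intro x hx
    obtain ⟨p, hp, rfl⟩ := List.mem_map.1 hx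
    have := (hr p hp).1
    split_ifs at this
    · exact hA this
    · exact hC this
  have hWr : ∀ W r : List (M × Bool), 
      (∀ p ∈ r, p.1 ∈ (if p.2 then A else C) ∧ EB p.1 = 0) →
      (∀ p ∈ W, p.1 ∈ (if p.2 then A' else D) ∧ EC p.1 = 0) →
      W.IsChain (fun p q : M × Bool => p.2 ≠ q.2) →
      (∀ a ∈ W.getLast?, a.2 = false) →
      r.IsChain (fun p q : M × Bool => p.2 ≠ q.2) →
      (∃ a ∈ r, a.2 = true) →
      (∀ p ∈ W ++ [((r.map Prod.fst).prod, true)],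
        p.1 ∈ (if p.2 then A' else D) ∧ EC p.1 = 0) ∧
      (W ++ [((r.map Prod.fst).prod, true)]).IsChain (fun p q : M × Bool => p.2 ≠ q.2) := by
    intro W r hr hW hWc hWl hrc hex
    constructor
    · intro p hp
      rcases List.mem_append.1 hp with hp | hp
      · exact hW p hp
      · simp only [List.mem_singleton] at hp
        subst hp
        exact ⟨by simpa using hmem r hr, hrun r hrc hr hex⟩
    · refine List.isChain_append.2 ⟨hWc, by simp, ?_⟩
      intro x hx y hy
      simp at hy
      subst hy
      simp [hWl x hx]
  induction L with
  | nil =>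
    intro W r _ hr hW hWc hWl hrc hhead hex
    simp only [List.append_nil] at *
    by_cases hr0 : r = []
    · subst hr0
      have hW0 : W ≠ [] := by simpa using hex
      simpa using hND W hW0 hWc hW
    · have hex' : ∃ a ∈ r, a.2 = true := by
        rcases hex with h | h | h
        · obtain ⟨a, r', rfl⟩ := List.exists_cons_of_ne_nil hr0
          exact ⟨a, by simp, hhead h a (by simp)⟩
        · exact h
        · simp at h
      obtain ⟨h1, h2⟩ := hWr W r hr hW hWc hWl hrc hex'
      simpa using hND _ (by simp) h2 h1
  | cons a L ih =>
    intro W r hL hr hW hWc hWl hrc hhead hex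
    rcases hL a (by simp) with ha | ha
    · by_cases hex2 : W ≠ [] ∨ (∃ b ∈ (r ++ [a]) ++ L, b.2 = true) ∨
          ∃ b ∈ L, b.2 = false ∧ b.1 ∈ D ∧ EC b.1 = 0
      · have := ih W (r ++ [a]) (fun p hp => hL p (by simp [hp])) (by
          intro p hp
          rcases List.mem_append.1 hp with hp | hp
          · exact hr p hp
          · simp only [List.mem_singleton] at hp
            exact hp ▸ ha) hW hWc hWl (by simpa using hrc) (by simpa using hhead) hex2
        simpa [mul_assoc] using this
      · -- `a` is then a centered element in `D` as well
        push Not at hex2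
        rcases hex with h | ⟨b, hb, hb'⟩ | ⟨b, hb, hb'⟩
        · exact absurd hex2.1 h
        · exact absurd hb' (hex2.2.1 b (by simpa using hb))
        · rcases List.mem_cons.1 hb with rfl | hb
          · -- treat it as a `D` element
            have hLr : r = [] := by
              by_contra hr0
              obtain ⟨r', x, rfl⟩ := (List.eq_nil_or_concat r).resolve_left hr0
              have h3 := (List.isChain_append.1 hrc).2.2 x (by simp) b (by simp)
              have := hex2.2.1 x (by simp)
              simp [hb'.1] at h3
              exact this h3
            have hL0 : L = [] := by
              by_contra hL0
              obtain ⟨x, L', rfl⟩ := List.exists_cons_of_ne_nil hL0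
              have h3 := (List.isChain_append.1 hrc).2.1
              have h4 : b.2 ≠ x.2 := by
                rw [List.isChain_cons_cons] at h3
                exact h3.1
              have := hex2.2.1 x (by simp)
              rw [hb'.1] at h4
              simp at h4
              exact this h4
            subst hLr hL0
            simp [hex2.1, hb'.2.2]
          · exact absurd hb'.2.2 (hex2.2.2 b hb hb'.1 hb'.2.1)
    · obtain ⟨d, t⟩ := a
      obtain ⟨rfl, hd, hd0⟩ : t = false ∧ d ∈ D ∧ EC d = 0 := ha
      have hsplit := List.isChain_append.1 hrc
      have htail := (List.isChain_cons.1 hsplit.2.1)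
      have key : ∀ W' : List (M × Bool),
          (∀ p ∈ W', p.1 ∈ (if p.2 then A' else D) ∧ EC p.1 = 0) →
          W'.IsChain (fun p q : M × Bool => p.2 ≠ q.2) →
          (∀ x ∈ W'.getLast?, x.2 = true) →
          EC ((W'.map Prod.fst).prod * d * (L.map Prod.fst).prod) = 0 := by
        intro W' h1 h2 h3
        have := ih (W' ++ [(d, false)]) [] (fun p hp => hL p (by simp [hp])) (by simp)
          (by
            intro p hp
            rcases List.mem_append.1 hp with hp | hp
            · exact h1 p hp
            · simp only [List.mem_singleton] at hp
              subst hp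
              exact ⟨by simpa using hd, hd0⟩)
          (by
            refine List.isChain_append.2 ⟨h2, by simp, ?_⟩
            intro x hx y hy
            simp at hy
            subst hy
            simp [h3 x hx])
          (by simp) (by simpa using htail.2)
          (by
            intro _ x hx
            have := htail.1 x (by simpa using hx)
            simpa using this)
          (by simp)
        simpa [mul_assoc] using this
      by_cases hr0 : r = []
      · subst hr0
        have hW0 : W = [] := by
          by_contra h
          have := hhead h (d, false) (by simp)
          simp at this
        subst hW0
        simpa using key [] (by simp) (by simp) (by simp)
      · have hex' : ∃ x ∈ r, x.2 = true := by
          obtain ⟨r', x, rfl⟩ := (List.eq_nil_or_concat r).resolve_left hr0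
          refine ⟨x, by simp, ?_⟩
          have h3 := hsplit.2.2 x (by simp) (d, false) (by simp)
          simpa using h3
        obtain ⟨h1, h2⟩ := hWr W r hr hW hWc hWl hsplit.1 hex'
        have := key _ h1 h2 (by simp)
        simpa [mul_assoc] using this

end Helpers

/-- Let `M` be a unital complex algebra, `N ⊆ M` a subalgebra and
`B ⊆ C ⊆ D ⊆ M` unital subalgebras with conditional expectations `E_B, E_C, E_D : M → M`
onto `B`, `C`, `D` respectively, satisfying `E_B = E_B ∘ E_C` and `E_C = E_C ∘ E_D`, and
the faithfulness conditions (i)–(iii).  If `N` is free from `C` with amalgamation over `B`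
(w.r.t. `E_B`) and free from `D` with amalgamation over `C` (w.r.t. `E_C`), then `N` is
free from `D` with amalgamation over `B` (w.r.t. `E_B`).  (Here "`N` free from `P` over
`A`" means: the subalgebra generated by `N` and `A` is free from `P` over `A`.) -/
theorem free_with_amalgamation_transitive
    {M : Type*} [Ring M] [Algebra ℂ M]
    (N B C D : Subalgebra ℂ M) (hBC : B ≤ C) (hCD : C ≤ D)
    (EB EC ED : M →ₗ[ℂ] M)
    (hEBr : ∀ m, EB m ∈ B) (hECr : ∀ m, EC m ∈ C) (hEDr : ∀ m, ED m ∈ D)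
    (hEB1 : EB 1 = 1) (hEC1 : EC 1 = 1) (hED1 : ED 1 = 1)
    (hEBbi : ∀ b ∈ B, ∀ b' ∈ B, ∀ m : M, EB (b * m * b') = b * EB m * b')
    (hECbi : ∀ c ∈ C, ∀ c' ∈ C, ∀ m : M, EC (c * m * c') = c * EC m * c')
    (hEDbi : ∀ d ∈ D, ∀ d' ∈ D, ∀ m : M, ED (d * m * d') = d * ED m * d')
    (hBCcomp : ∀ m, EB (EC m) = EB m) (hCDcomp : ∀ m, EC (ED m) = EC m)
    (hEBfaith : ∀ c ∈ C, (∀ c' ∈ C, EB (c * c') = 0) → c = 0)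
    (hECfaith : ∀ d ∈ D, (∀ d' ∈ D, EC (d * d') = 0) → d = 0)
    (hEDfaith : ∀ m : M, (∀ m' : M, ED (m * m') = 0) → m = 0)
    (hNC : FreeWithAmalgamation (fun m => EB m) (N ⊔ B) C)
    (hND : FreeWithAmalgamation (fun m => EC m) (N ⊔ C) D) :
    FreeWithAmalgamation (fun m => EB m) (N ⊔ B) D := by
  have hC : ∀ c ∈ C, EC c = c := by
    intro c hc
    have := hECbi c hc 1 C.one_mem 1
    simpa [hEC1] using this
  have hrun : ∀ r : List (M × Bool), r.IsChain (fun p q : M × Bool => p.2 ≠ q.2) →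
      (∀ p ∈ r, p.1 ∈ (if p.2 then N ⊔ B else C) ∧ EB p.1 = 0) →
      (∃ a ∈ r, a.2 = true) → EC (r.map Prod.fst).prod = 0 := by
    intro r h1 h2 h3
    apply hEBfaith _ (hECr _)
    intro c hc
    have := hECbi 1 C.one_mem c hc (r.map Prod.fst).prod
    rw [one_mul, one_mul] at this
    rw [← this, hBCcomp]
    exact aux_run (N ⊔ B) B C hBC EB hEBr hEB1 hEBbi hNC r h1 h2 h3 c hc
  -- the case in which each element of `D` lies in `C` or is `EC`-centered
  have hpure : ∀ L : List (M × Bool), L ≠ [] →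
      L.IsChain (fun p q : M × Bool => p.2 ≠ q.2) →
      (∀ p ∈ L, (p.1 ∈ (if p.2 then N ⊔ B else C) ∧ EB p.1 = 0) ∨
        (p.2 = false ∧ p.1 ∈ D ∧ EC p.1 = 0)) →
      EB (L.map Prod.fst).prod = 0 := by
    intro L hne hch hL
    by_cases hex : (∃ a ∈ L, a.2 = true) ∨ ∃ a ∈ L, a.2 = false ∧ a.1 ∈ D ∧ EC a.1 = 0
    · have := aux_pure (N ⊔ B) (N ⊔ C) C D EB EC (sup_le_sup_left hBC N) le_sup_right hND hrun L
        [] [] hL (by simp) (by simp) (by simp) (by simp) (by simpa using hch) (by simp)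
        (Or.inr (by simpa using hex))
      rw [← hBCcomp]
      simp at this
      rw [this, map_zero]
    · have hall : ∀ a ∈ L, a.2 = false := by
        intro a ha
        by_contra h
        exact hex (Or.inl ⟨a, ha, by simpa using h⟩)
      match L, hne, hch, hL, hex, hall with
      | [a], _, _, hL, hex, _ =>
        rcases hL a (by simp) with h | h
        · simpa using h.2
        · exact absurd (Or.inr ⟨a, by simp, h⟩) hex
      | a :: b :: L, _, hch, _, _, hall =>
        rw [List.isChain_cons_cons] at hch
        exact absurd ((hall a (by simp)).trans (hall b (by simp)).symm) hch.1
  -- expansion of the elements of `D`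
  have hexp : ∀ l P : List (M × Bool), P ++ l ≠ [] →
      (P ++ l).IsChain (fun p q : M × Bool => p.2 ≠ q.2) →
      (∀ p ∈ P, (p.1 ∈ (if p.2 then N ⊔ B else C) ∧ EB p.1 = 0) ∨
        (p.2 = false ∧ p.1 ∈ D ∧ EC p.1 = 0)) →
      (∀ p ∈ l, p.1 ∈ (if p.2 then N ⊔ B else D) ∧ EB p.1 = 0) →
      EB ((P ++ l).map Prod.fst).prod = 0 := by
    intro l
    induction l with
    | nil =>
      intro P hne hch hP _
      simp only [List.append_nil] at *
      exact hpure P hne hch hP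
    | cons a l ih =>
      intro P hne hch hP hl
      obtain ⟨d, t⟩ := a
      obtain ⟨hd, hd0⟩ := hl (d, t) (by simp)
      have step : ∀ x : M, ((x ∈ (if t then N ⊔ B else C) ∧ EB x = 0) ∨
          (t = false ∧ x ∈ D ∧ EC x = 0)) →
          EB ((P ++ (x, t) :: l).map Prod.fst).prod = 0 := by
        intro x hx
        have := ih (P ++ [(x, t)]) (by simp) (by
          have h := List.isChain_append.1 hch
          have h' := List.isChain_cons.1 h.2.1
          rw [List.append_assoc]
          refine List.isChain_append.2 ⟨h.1, ?_, ?_⟩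
          · exact List.isChain_cons.2 h'
          · intro y hy z hz
            simp at hz
            subst hz
            exact h.2.2 y hy (d, t) (by simp)) (by
          intro p hp
          rcases List.mem_append.1 hp with hp | hp
          · exact hP p hp
          · simp only [List.mem_singleton] at hp
            subst hp
            exact hx) (fun p hp => hl p (by simp [hp]))
        simpa [mul_assoc] using this
      cases t with
      | true => exact step d (Or.inl ⟨by simpa using hd, hd0⟩)
      | false =>
        have h1 := step (EC d) (Or.inl ⟨by simpa using hECr d, by rw [hBCcomp]; exact hd0⟩)
        have h2 := step (d - EC d) (Or.inr ⟨rfl,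
          D.sub_mem (by simpa using hd) (hCD (hECr d)), by simp [hC _ (hECr d)]⟩)
        have e : ((P ++ (d, false) :: l).map Prod.fst).prod =
            ((P ++ (EC d, false) :: l).map Prod.fst).prod +
            ((P ++ (d - EC d, false) :: l).map Prod.fst).prod := by
          simp only [List.map_append, List.map_cons, List.prod_append, List.prod_cons]
          noncomm_ring
        rw [e, map_add, h1, h2, add_zero]
  intro l hne hch hl
  exact hexp l [] hne hch (by simp) hl
end
end

section
/- Let B be a unital complex algebra, (M, E : M → B) a B-probability space, D ⊆ B a unital subalgebra, and F : B → D a conditional expectation satisfying the faithfulness condition. Let X₁, …, Xₙ ∈ M and Z₁, …, Zₙ ∈ M be two families, each of which is free from B with amalgamation over D (with respect to F∘E). Assume the two families have the same D-valued joint distribution: F(E(d₀ X_{i₁} d₁ X_{i₂} d₂ ⋯ X_{i_k} d_k)) = F(E(d₀ Z_{i₁} d₁ Z_{i₂} d₂ ⋯ Z_{i_k} d_k)) for all k ≥ 1, all indices i₁, …, i_k ∈ {1, …, n} and all d₀, …, d_k ∈ D. Then they have the same B-valued joint distribution: E(b₀ X_{i₁} b₁ X_{i₂} b₂ ⋯ X_{i_k}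 b_k) = E(b₀ Z_{i₁} b₁ Z_{i₂} b₂ ⋯ Z_{i_k} b_k) for all k ≥ 1, all indices i₁, …, i_k ∈ {1, …, n} and all b₀, …, b_k ∈ B. -/
open scoped Classical

noncomputable section

open OVFree

namespace OVFreeAux

/-- Span of `D` and the alternating centered words. -/
def V {R : Type*} [Ring R] [Algebra ℂ R] (G : R →ₗ[ℂ] R) (A : Bool → Subalgebra ℂ R) :
    Submodule ℂ R :=
  Submodule.span ℂ (Set.range G ∪ {x | ∃ l : List (R × Bool), l ≠ [] ∧
    List.IsChain (fun p q : R × Bool => p.2 ≠ q.2) l ∧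
    (∀ p ∈ l, p.1 ∈ A p.2 ∧ G p.1 = 0) ∧ (l.map Prod.fst).prod = x})

section
variable {R : Type*} [Ring R] [Algebra ℂ R] (G : R →ₗ[ℂ] R) (A : Bool → Subalgebra ℂ R)

theorem G_mem_V (a : R) : G a ∈ V G A :=
  Submodule.subset_span (Or.inl ⟨a, rfl⟩)

theorem word_mem_V (l : List (R × Bool)) (h0 : l ≠ [])
    (hc : List.IsChain (fun p q : R × Bool => p.2 ≠ q.2) l)
    (h : ∀ p ∈ l, p.1 ∈ A p.2 ∧ G p.1 = 0) : (l.map Prod.fst).prod ∈ V G A :=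
  Submodule.subset_span (Or.inr ⟨l, h0, hc, h, rfl⟩)

theorem G_mul_word (hG : ∀ a b, G a ∈ A b)
    (hl : ∀ a x, G (G a * x) = G a * G x)
    (a : R) (l : List (R × Bool))
    (hc : List.IsChain (fun p q : R × Bool => p.2 ≠ q.2) l)
    (h : ∀ p ∈ l, p.1 ∈ A p.2 ∧ G p.1 = 0) : G a * (l.map Prod.fst).prod ∈ V G A := by
  cases l with
  | nil => simpa using G_mem_V G A a
  | cons p t =>
    have := word_mem_V G A ((G a * p.1, p.2) :: t) (by simp)
      (by
        rw [List.isChain_cons] at hc ⊢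
        exact hc)
      (by
        intro q hq
        rcases List.mem_cons.1 hq with rfl | hq
        · have := h p (by simp)
          exact ⟨(A p.2).mul_mem (hG _ _) this.1, by simp [hl, this.2]⟩
        · exact h q (by simp [hq]))
    simpa [mul_assoc] using this

theorem mul_word (hG : ∀ a b, G a ∈ A b) (hGG : ∀ a, G (G a) = G a)
    (hl : ∀ a x, G (G a * x) = G a * G x)
    (i : Bool) (a : R) (ha : a ∈ A i) (l : List (R × Bool))
    (hc : List.IsChain (fun p q : R × Bool => p.2 ≠ q.2) l)
    (hh : ∀ p ∈ l.head?, i ≠ p.2)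
    (h : ∀ p ∈ l, p.1 ∈ A p.2 ∧ G p.1 = 0) : a * (l.map Prod.fst).prod ∈ V G A := by
  have h1 := word_mem_V G A ((a - G a, i) :: l) (by simp)
      (by
        rw [List.isChain_cons]
        exact ⟨hh, hc⟩)
      (by
        intro q hq
        rcases List.mem_cons.1 hq with rfl | hq
        · exact ⟨(A i).sub_mem ha (hG _ _), by simp [hGG]⟩
        · exact h q hq)
  have h2 := G_mul_word G A hG hl a l hc h
  have := (V G A).add_mem h1 h2
  simpa [sub_mul] using this

theorem mul_mem_V (hG : ∀ a b, G a ∈ A b) (hGG : ∀ a, G (G a) = G a)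
    (hl : ∀ a x, G (G a * x) = G a * G x)
    (i : Bool) (a : R) (ha : a ∈ A i) (v : R) (hv : v ∈ V G A) :
    a * v ∈ V G A := by
  unfold V at hv
  induction hv using Submodule.span_induction with
  | mem x hx =>
    rcases hx with ⟨d, rfl⟩ | ⟨l, h0, hc, h, rfl⟩
    · have := mul_word G A hG hGG hl i (a * G d) ((A i).mul_mem ha (hG _ _)) []
        (by simp) (by simp) (by simp)
      simpa using this
    · cases l with
      | nil => exact absurd rfl h0
      | cons p t =>
        by_cases hip : i = p.2
        · have hc' := List.isChain_cons.1 hc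
          have := mul_word G A hG hGG hl i (a * p.1)
            ((A i).mul_mem ha (hip ▸ (h p (by simp)).1)) t hc'.2
            (by rw [hip]; exact hc'.1) (fun q hq => h q (by simp [hq]))
          simpa [mul_assoc] using this
        · exact mul_word G A hG hGG hl i a ha (p :: t) hc (by simpa using hip) h
  | zero => simp
  | add x y _ _ hx hy => rw [mul_add]; exact add_mem hx hy
  | smul c x _ hx => rw [mul_smul_comm]; exact Submodule.smul_mem _ _ hx

end

section
variable {B M : Type*} [Ring B] [Algebra ℂ B] [Ring M] [Algebra ℂ M]
  (ι : B →ₐ[ℂ] M) (D : Subalgebra ℂ B) {N : ℕ} (X Z : Fin N → M)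

/-- Pair algebra. -/
def A1 : Subalgebra ℂ (M × M) :=
  Algebra.adjoin ℂ (Set.range (fun i => (X i, Z i)) ∪ (fun b => (ι b, ι b)) '' (D : Set B))

theorem A1_fst (a : M × M) (ha : a ∈ A1 ι D X Z) :
    a.1 ∈ Algebra.adjoin ℂ (Set.range X ∪ (ι '' (D : Set B))) := by
  have : A1 ι D X Z ≤ (Algebra.adjoin ℂ (Set.range X ∪ (ι '' (D : Set B)))).comap
      (AlgHom.fst ℂ M M) := by
    refine Algebra.adjoin_le ?_
    rintro _ (⟨i, rfl⟩ | ⟨d, hd, rfl⟩)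
    · exact Algebra.subset_adjoin (Or.inl ⟨i, rfl⟩)
    · exact Algebra.subset_adjoin (Or.inr ⟨d, hd, rfl⟩)
  exact this ha

theorem A1_snd (a : M × M) (ha : a ∈ A1 ι D X Z) :
    a.2 ∈ Algebra.adjoin ℂ (Set.range Z ∪ (ι '' (D : Set B))) := by
  have : A1 ι D X Z ≤ (Algebra.adjoin ℂ (Set.range Z ∪ (ι '' (D : Set B)))).comap
      (AlgHom.snd ℂ M M) := by
    refine Algebra.adjoin_le ?_
    rintro _ (⟨i, rfl⟩ | ⟨d, hd, rfl⟩)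
    · exact Algebra.subset_adjoin (Or.inl ⟨i, rfl⟩)
    · exact Algebra.subset_adjoin (Or.inr ⟨d, hd, rfl⟩)
  exact this ha

/-- The word `d₀ X d₁ X d₂ ⋯`. -/
def word (X : Fin N → M) (d : D) (l : List (Fin N × D)) : M :=
  (ι (d : B) :: l.map fun p => X p.1 * ι (p.2 : B)).prod

theorem A1_span (a : M × M) (ha : a ∈ A1 ι D X Z) :
    a ∈ Submodule.span ℂ {x : M × M | ∃ d l, x = (word ι D X d l, word ι D Z d l)} := by
  set S := Submodule.span ℂ {x : M × M | ∃ d l, x = (word ι D X d l, word ι D Z d l)} with hS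
  have key : ∀ v ∈ S, a * v ∈ S := by
    unfold A1 at ha
    induction ha using Algebra.adjoin_induction with
    | mem x hx =>
      intro v hv
      rw [hS] at hv
      induction hv using Submodule.span_induction with
      | mem v hv =>
        obtain ⟨d, l, rfl⟩ := hv
        refine Submodule.subset_span ?_
        rcases hx with ⟨i, rfl⟩ | ⟨e, he, rfl⟩
        · exact ⟨1, (i, d) :: l, by simp [word, mul_assoc]⟩
        · exact ⟨⟨e, he⟩ * d, l, by simp [word, mul_assoc]⟩
      | zero => simp
      | add x y _ _ hx hy => rw [mul_add]; exact add_mem hx hy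
      | smul c x _ hx => rw [mul_smul_comm]; exact Submodule.smul_mem _ _ hx
    | algebraMap r =>
      intro v hv
      rw [← Algebra.smul_def]; exact Submodule.smul_mem _ _ hv
    | add x y _ _ hx hy => intro v hv; rw [add_mul]; exact add_mem (hx v hv) (hy v hv)
    | mul x y _ _ hx hy => intro v hv; rw [mul_assoc]; exact hx _ (hy v hv)
  have h1 : (1 : M × M) ∈ S := Submodule.subset_span ⟨1, [], by simp [word, Prod.ext_iff]⟩
  simpa using key 1 h1

end

end OVFreeAux

/-- Let `(M, E : M → B)` be a `B`-probability space (with `ι : B → M` the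
inclusion of `B` as a unital subalgebra), `D ⊆ B` a unital subalgebra and `F : B → D` a
conditional expectation satisfying the faithfulness condition.  Let `X₁, …, X_N` and
`Z₁, …, Z_N` be two families in `M`, each free from `B` with amalgamation over `D` (with
respect to `F∘E`).  If the two families have the same `D`-valued joint distribution
(`F∘E` applied to words `d₀ X_{i₁} d₁ ⋯ X_{i_k} d_k` with `dⱼ ∈ D` agree), then they have
the same `B`-valued joint distribution (`E` applied to words `b₀ X_{i₁} b₁ ⋯ X_{i_k} b_k`
with `bⱼ ∈ B` agree).  Words are encoded as ordered list products, `k ≥ 1` being encoded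
as `k + 1` `X`-factors. -/
theorem same_D_distribution_implies_same_B_distribution_of_free
    {B M : Type*} [Ring B] [Algebra ℂ B] [Ring M] [Algebra ℂ M]
    (ι : B →ₐ[ℂ] M) (hι : Function.Injective ι)
    (E : M →ₗ[ℂ] B) (hE : IsCondExp ι E)
    (D : Subalgebra ℂ B)
    (F : B →ₗ[ℂ] B) (hFD : ∀ b, F b ∈ D) (hFid : ∀ d ∈ D, F d = d)
    (hFbimod : ∀ d ∈ D, ∀ d' ∈ D, ∀ b : B, F (d * b * d') = d * F b * d')
    (hFfaithful : ∀ b₁ : B, (∀ b₂ : B, F (b₁ * b₂) = 0) → b₁ = 0)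
    {N : ℕ} (X Z : Fin N → M)
    (hXfree : FreeWithAmalgamation (fun m => F (E m))
      (Algebra.adjoin ℂ (Set.range X ∪ (ι '' (D : Set B)))) ι.range)
    (hZfree : FreeWithAmalgamation (fun m => F (E m))
      (Algebra.adjoin ℂ (Set.range Z ∪ (ι '' (D : Set B)))) ι.range)
    (hsame : ∀ (k : ℕ) (i : Fin (k + 1) → Fin N) (d : Fin (k + 2) → ↥D),
      F (E ((ι (d 0) ::
          (List.finRange (k + 1)).map fun j => X (i j) * ι ((d j.succ : B))).prod))
        = F (E ((ι (d 0) ::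
          (List.finRange (k + 1)).map fun j => Z (i j) * ι ((d j.succ : B))).prod))) :
    ∀ (k : ℕ) (i : Fin (k + 1) → Fin N) (b : Fin (k + 2) → B),
      E ((ι (b 0) :: (List.finRange (k + 1)).map fun j => X (i j) * ι (b j.succ)).prod)
        = E ((ι (b 0) :: (List.finRange (k + 1)).map fun j => Z (i j) * ι (b j.succ)).prod) := by
  have hE2 : ∀ b, E (ι b) = b := by
    intro b
    have := hE.2 b 1 1
    simpa [hE.1] using this
  have hEl : ∀ b m, E (ι b * m) = b * E m := by
    intro b m
    simpa using hE.2 b 1 m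
  have hEr : ∀ b m, E (m * ι b) = E m * b := by
    intro b m
    simpa using hE.2 1 b m
  have hFl : ∀ d ∈ D, ∀ b, F (d * b) = d * F b := by
    intro d hd b
    simpa using hFbimod d hd 1 D.one_mem b
  -- words over `D`
  have hword : ∀ (d : D) (l : List (Fin N × D)),
      F (E (OVFreeAux.word ι D X d l)) = F (E (OVFreeAux.word ι D Z d l)) := by
    intro d l
    cases hl : l.length with
    | zero =>
      obtain rfl := List.length_eq_zero_iff.1 hl
      simp [OVFreeAux.word]
    | succ k =>
      have := hsame k (fun j => (l.get (j.cast hl.symm)).1)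
        (Fin.cons d (fun j => (l.get (j.cast hl.symm)).2))
      have hmap : ∀ f : Fin N × D → M,
          (List.finRange (k+1)).map (fun j => f (l.get (j.cast hl.symm))) = l.map f := by
        intro f
        apply List.ext_getElem
        · simp [hl]
        · intro n h1 h2
          simp
      have hx := hmap (fun p => X p.1 * ι (p.2 : B))
      have hz := hmap (fun p => Z p.1 * ι (p.2 : B))
      simp only [Fin.cons_zero, Fin.cons_succ] at this
      rw [hx, hz] at this
      exact this
  let G : M × M →ₗ[ℂ] M × M :=
    ((ι.toLinearMap ∘ₗ F ∘ₗ E ∘ₗ LinearMap.fst ℂ M M).prod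
      (ι.toLinearMap ∘ₗ F ∘ₗ E ∘ₗ LinearMap.fst ℂ M M))
  have hGdef : ∀ a, G a = (ι (F (E a.1)), ι (F (E a.1))) := fun a => rfl
  let A : Bool → Subalgebra ℂ (M × M) := fun b =>
    if b then OVFreeAux.A1 ι D X Z else (ι.prod ι).range
  have hA1 : ∀ a ∈ OVFreeAux.A1 ι D X Z, F (E a.1) = F (E a.2) := by
    intro a ha
    have := OVFreeAux.A1_span ι D X Z a ha
    clear ha
    induction this using Submodule.span_induction with
    | mem x hx => obtain ⟨d, l, rfl⟩ := hx; exact hword d l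
    | zero => simp
    | add x y _ _ hx hy => simp only [Prod.fst_add, Prod.snd_add, map_add, hx, hy]
    | smul c x _ hx => simp only [Prod.smul_fst, Prod.smul_snd, map_smul, hx]
  have hA : ∀ i, ∀ a ∈ A i, F (E a.1) = F (E a.2) := by
    intro i a ha
    cases i with
    | true => exact hA1 a ha
    | false =>
      obtain ⟨b, rfl⟩ := ha
      rfl
  have hG : ∀ a b, G a ∈ A b := by
    intro a b
    cases b with
    | true => exact Algebra.subset_adjoin (Or.inr ⟨_, hFD _, rfl⟩)
    | false => exact ⟨F (E a.1), rfl⟩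
  have hGG : ∀ a, G (G a) = G a := by
    intro a
    simp only [hGdef, hE2, hFid _ (hFD _)]
  have hl : ∀ a x, G (G a * x) = G a * G x := by
    intro a x
    simp only [hGdef, Prod.mk_mul_mk, Prod.fst_mul, hEl, hFl _ (hFD _), map_mul]
  have hV : ∀ v ∈ OVFreeAux.V G A, F (E v.1) = F (E v.2) := by
    intro v hv
    unfold OVFreeAux.V at hv
    induction hv using Submodule.span_induction with
    | mem x hx =>
      rcases hx with ⟨d, rfl⟩ | ⟨l, h0, hc, h, rfl⟩
      · rfl
      · have h00 : ∀ p ∈ l, F (E p.1.1) = 0 := by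
          intro p hp
          have := congrArg (fun a => E a.1) (h p hp).2
          simpa [hGdef, hE2] using this
        have e1 := hXfree (l.map fun p => (p.1.1, p.2)) (by simpa using h0)
          (by
            refine List.isChain_map_of_isChain (f := fun p : (M × M) × Bool => (p.1.1, p.2)) ?_ hc
            intro a b hab
            exact hab)
          (by
            intro q hq
            obtain ⟨p, hp, rfl⟩ := List.mem_map.1 hq
            refine ⟨?_, h00 p hp⟩
            obtain ⟨a, i⟩ := p
            have := (h _ hp).1
            cases i with
            | true => exact OVFreeAux.A1_fst ι D X Z _ this
            | false =>
              obtain ⟨b, rfl⟩ := this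
              exact ⟨b, rfl⟩)
        have e2 := hZfree (l.map fun p => (p.1.2, p.2)) (by simpa using h0)
          (by
            refine List.isChain_map_of_isChain (f := fun p : (M × M) × Bool => (p.1.2, p.2)) ?_ hc
            intro a b hab
            exact hab)
          (by
            intro q hq
            obtain ⟨p, hp, rfl⟩ := List.mem_map.1 hq
            refine ⟨?_, (hA _ _ (h p hp).1).symm.trans (h00 p hp)⟩
            obtain ⟨a, i⟩ := p
            have := (h _ hp).1
            cases i with
            | true => exact OVFreeAux.A1_snd ι D X Z _ this
            | false =>
              obtain ⟨b, rfl⟩ := this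
              exact ⟨b, rfl⟩)
        have f1 : (l.map Prod.fst).prod.1 = ((l.map fun p => (p.1.1, p.2)).map Prod.fst).prod := by
          have := map_list_prod (AlgHom.fst ℂ M M) (l.map Prod.fst)
          simpa [Function.comp_def] using this
        have f2 : (l.map Prod.fst).prod.2 = ((l.map fun p => (p.1.2, p.2)).map Prod.fst).prod := by
          have := map_list_prod (AlgHom.snd ℂ M M) (l.map Prod.fst)
          simpa [Function.comp_def] using this
        rw [f1, f2]
        exact e1.trans e2.symm
    | zero => simp
    | add x y _ _ hx hy => simp only [Prod.fst_add, Prod.snd_add, map_add, hx, hy]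
    | smul c x _ hx => simp only [Prod.smul_fst, Prod.smul_snd, map_smul, hx]
  have hmul := OVFreeAux.mul_mem_V G A hG hGG hl
  have hmB : ∀ b v, v ∈ OVFreeAux.V G A → (ι b, ι b) * v ∈ OVFreeAux.V G A :=
    fun b v hv => hmul false _ ⟨b, rfl⟩ v hv
  have hmX : ∀ i v, v ∈ OVFreeAux.V G A → (X i, Z i) * v ∈ OVFreeAux.V G A :=
    fun i v hv => hmul true _ (Algebra.subset_adjoin (Or.inl ⟨i, rfl⟩)) v hv
  have h1 : (1 : M × M) ∈ OVFreeAux.V G A := by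
    have := OVFreeAux.G_mem_V G A 1
    have e : G 1 = 1 := by
      simp [hGdef, hE.1, hFid 1 D.one_mem]
    rwa [e] at this
  have hw : ∀ (l : List (Fin N × B)) (c : B),
      ((l.map fun p => X p.1 * ι p.2).prod * ι c, (l.map fun p => Z p.1 * ι p.2).prod * ι c)
        ∈ OVFreeAux.V G A := by
    intro l c
    induction l with
    | nil => simpa using hmB c 1 h1
    | cons p t ih =>
      simpa [mul_assoc] using hmX p.1 _ (hmB p.2 _ ih)
  intro k i b
  refine sub_eq_zero.1 (hFfaithful _ fun c => ?_)
  have h := hV _ (hmB (b 0) _ (hw ((List.finRange (k+1)).map fun j => (i j, b j.succ)) c))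
  simp only [List.map_map, Function.comp_def, Prod.mk_mul_mk, ← mul_assoc, hEr] at h
  rw [sub_mul, map_sub, List.prod_cons, List.prod_cons, h, sub_self]
end
end
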